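/- arXiv:2209.01826 — 2 statements merged into one kernel-verified Lean document; each statement's English description precedes it below -/
import Mathlib

section
/- Let n > 2k ≥ 4. If F and G are families of k-subsets of [n] that are cross-intersecting (F ∩ G ≠ ∅ for all F ∈ F, G ∈ G) and both non-trivial (each has empty total intersection), then |F| + |G| ≤ C(n,k) - 2·C(n-k,k) + C(n-2k,k) + 2. -/
/-!
The two families are compressed together: replacing `j` by a smaller `i` preserves sizes and the
cross-intersection, and it can destroy non-triviality only if every member of one family meets
`{i, j}`.

If it never does, both families may be assumed shifted. Let `I` be the first `k + 1` elements of
the ground set. By shiftedness and non-triviality each family contains all `k`-subsets of `I`, so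
every member of the other meets `I` in at least two elements. Deleting the largest element, one
finds that the sum of the sizes exceeds the number of `k`-sets meeting `I` in at least two elements
by at most `k + 1`, which is enough: the link at that element is handled by complementation, and
the excess arises when only `2 * k` elements are left.

If instead every member of `F` meets `{i, j}`, no set of `F` avoids both elements, and the links at
`i` and `j` are bounded by the Hilton–Milner inequality for pairs of cross-intersecting families
and by an induction on a transversal `A`: non-triviality provides, for each `x ∈ A`, another
transversal avoiding `x`.
-/

open Finset UV

open scoped FinsetFamily

variable {α : Type*}

/-- `B` is a transversal (a cover) of the family `F`: it meets every member of `F`. -/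
def IsTransversal [DecidableEq α] (B : Finset α) (F : Finset (Finset α)) : Prop :=
  ∀ A ∈ F, (A ∩ B).Nonempty

/-- Non-triviality of a family: its members have no common element. -/
def IsNontrivialFamily (F : Finset (Finset α)) : Prop :=
  ∀ x, ∃ A ∈ F, x ∉ A

/-- Cross-intersecting families of `a`-subsets and of `b`-subsets of `V`. The ground set and the
two sizes are part of the notion, so that its links can be described uniformly. -/
structure IsCrossIntersecting [DecidableEq α] (V : Finset α) (a b : ℕ)
    (F G : Finset (Finset α)) : Prop where
  left_subset : F ⊆ powersetCard a V
  right_subset : G ⊆ powersetCard b V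
  inter_nonempty : ∀ A ∈ F, ∀ B ∈ G, (A ∩ B).Nonempty

/-- For each `x ∈ A` the family `Y` has a transversal with at most `q` elements avoiding `x`.
The links of a family cross-intersecting with a non-trivial one have this property. -/
def HasTransversalsAvoiding [DecidableEq α] (A : Finset α) (q : ℕ)
    (Y : Finset (Finset α)) : Prop :=
  ∀ x ∈ A, ∃ B, IsTransversal B Y ∧ #B ≤ q ∧ x ∉ B

section Links

variable [DecidableEq α] {V A B : Finset α} {F G X Y : Finset (Finset α)} {a b k q : ℕ} {x : α}

theorem memberSubfamily_subset_powersetCard (hF : F ⊆ powersetCard k V) (x : α) :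
    F.memberSubfamily x ⊆ powersetCard (k - 1) (V.erase x) := by
  intro A hA
  rw [mem_memberSubfamily] at hA
  have h := mem_powersetCard.1 (hF hA.1)
  rw [card_insert_of_notMem hA.2] at h
  exact mem_powersetCard.2
    ⟨subset_erase.2 ⟨(subset_insert x A).trans h.1, hA.2⟩, Nat.eq_sub_of_add_eq h.2⟩

theorem nonMemberSubfamily_subset_powersetCard (hF : F ⊆ powersetCard k V) (x : α) :
    F.nonMemberSubfamily x ⊆ powersetCard k (V.erase x) := by
  intro A hA
  rw [mem_nonMemberSubfamily] at hA
  have h := mem_powersetCard.1 (hF hA.1)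
  exact mem_powersetCard.2 ⟨subset_erase.2 ⟨h.1, hA.2⟩, h.2⟩

theorem erase_mem_memberSubfamily (hA : A ∈ F) (hx : x ∈ A) : A.erase x ∈ F.memberSubfamily x :=
  mem_memberSubfamily.2 ⟨by rwa [insert_erase hx], notMem_erase x A⟩

theorem IsTransversal.mono (h : IsTransversal B F) (hG : G ⊆ F) : IsTransversal B G :=
  fun A hA => h A (hG hA)

theorem IsTransversal.memberSubfamily (h : IsTransversal B F) (hx : x ∉ B) :
    IsTransversal B (F.memberSubfamily x) := fun A hA => by
  simpa only [insert_inter_of_notMem hx] using h _ (mem_memberSubfamily.1 hA).1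

theorem IsTransversal.erase_nonMemberSubfamily (h : IsTransversal B F) (x : α) :
    IsTransversal (B.erase x) (F.nonMemberSubfamily x) := fun A hA => by
  obtain ⟨hA, hx⟩ := mem_nonMemberSubfamily.1 hA
  rw [inter_erase, erase_eq_of_notMem fun h => hx (mem_inter.1 h).1]
  exact h A hA

theorem HasTransversalsAvoiding.mono (h : HasTransversalsAvoiding A q Y) (hBA : B ⊆ A)
    (hX : X ⊆ Y) : HasTransversalsAvoiding B q X := fun x hx =>
  let ⟨C, hC, hCq, hxC⟩ := h x (hBA hx)
  ⟨C, hC.mono hX, hCq, hxC⟩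

namespace IsCrossIntersecting

theorem symm (h : IsCrossIntersecting V a b F G) : IsCrossIntersecting V b a G F :=
  ⟨h.right_subset, h.left_subset, fun B hB A hA => inter_comm A B ▸ h.inter_nonempty A hA B hB⟩

theorem isTransversal (h : IsCrossIntersecting V a b F G) (hA : A ∈ F) : IsTransversal A G :=
  fun B hB => h.symm.inter_nonempty B hB A hA

theorem mono (h : IsCrossIntersecting V a b F G) (hX : X ⊆ F) (hY : Y ⊆ G) :
    IsCrossIntersecting V a b X Y :=
  ⟨hX.trans h.left_subset, hY.trans h.right_subset,
    fun A hA B hB => h.inter_nonempty A (hX hA) B (hY hB)⟩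

theorem member_nonMember (h : IsCrossIntersecting V a b F G) (x : α) :
    IsCrossIntersecting (V.erase x) (a - 1) b (F.memberSubfamily x) (G.nonMemberSubfamily x) where
  left_subset := memberSubfamily_subset_powersetCard h.left_subset x
  right_subset := nonMemberSubfamily_subset_powersetCard h.right_subset x
  inter_nonempty A hA B hB := by
    rw [mem_memberSubfamily] at hA
    rw [mem_nonMemberSubfamily] at hB
    simpa only [insert_inter_of_notMem hB.2] using h.inter_nonempty _ hA.1 _ hB.1

theorem nonMember_member (h : IsCrossIntersecting V a b F G) (x : α) :
    IsCrossIntersecting (V.erase x) a (b - 1) (F.nonMemberSubfamily x) (G.memberSubfamily x) :=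
  (h.symm.member_nonMember x).symm

theorem nonMember_nonMember (h : IsCrossIntersecting V a b F G) (x : α) :
    IsCrossIntersecting (V.erase x) a b (F.nonMemberSubfamily x) (G.nonMemberSubfamily x) where
  left_subset := nonMemberSubfamily_subset_powersetCard h.left_subset x
  right_subset := nonMemberSubfamily_subset_powersetCard h.right_subset x
  inter_nonempty A hA B hB :=
    h.inter_nonempty A (mem_nonMemberSubfamily.1 hA).1 B (mem_nonMemberSubfamily.1 hB).1

end IsCrossIntersecting

end Links

section Counting

theorem choose_lt_choose {m n s : ℕ} (hs : 0 < s) (hsn : s ≤ n) (hmn : m < n) :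
    m.choose s < n.choose s := by
  have hle := Nat.choose_le_choose s (show m ≤ n - 1 by omega)
  have hpos := Nat.choose_pos (show s - 1 ≤ n - 1 by omega)
  have hpascal := Nat.choose_eq_choose_pred_add (show 0 < n by omega) hs
  omega

variable [DecidableEq α] {V B : Finset α} {F G X Y : Finset (Finset α)} {a b k q : ℕ}

theorem IsTransversal.card_add_choose_le (h : IsTransversal B F) (hF : F ⊆ powersetCard k V)
    (hB : #B ≤ q) : #F + (#V - q).choose k ≤ (#V).choose k := by
  have hdisj : Disjoint F (powersetCard k (V \ B)) := disjoint_left.2 fun A hA hAB =>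
    not_disjoint_iff_nonempty_inter.2 (h A hA) (subset_sdiff.1 (mem_powersetCard.1 hAB).1).2
  calc #F + (#V - q).choose k ≤ #F + #(powersetCard k (V \ B)) := by
        rw [card_powersetCard]
        gcongr
        have := le_card_sdiff B V
        omega
    _ = #(F ∪ powersetCard k (V \ B)) := (card_union_of_disjoint hdisj).symm
    _ ≤ #(powersetCard k V) := card_le_card (union_subset hF (powersetCard_mono sdiff_subset))
    _ = (#V).choose k := card_powersetCard k V

theorem choose_sub_le_choose_sub_of_le {N : ℕ} (hab : a ≤ b) (hN : a + b ≤ N) :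
    (N - b).choose a ≤ (N - a).choose b := by
  obtain ⟨c, rfl⟩ := Nat.exists_eq_add_of_le hN
  rw [show a + b + c - b = c + a by omega, show a + b + c - a = c + b by omega,
    ← Nat.choose_symm_add, ← Nat.choose_symm_add]
  exact Nat.choose_le_choose c (by omega)

/- Double counting of the disjoint pairs between `F` and the complement of `G`: each `A ∈ F` lies
in `(#V - a).choose b` of them, each `b`-set in at most `(#V - b).choose a`. -/
theorem IsCrossIntersecting.card_add_card_le_choose (h : IsCrossIntersecting V a b F G)
    (hab : a ≤ b) (hV : a + b ≤ #V) : #F + #G ≤ (#V).choose b := by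
  have hcount : #F * (#V - a).choose b ≤ #(powersetCard b V \ G) * (#V - b).choose a := by
    refine card_mul_le_card_mul Disjoint (fun A hA => ?_) fun B hB => ?_
    · obtain ⟨hAV, hAa⟩ := mem_powersetCard.1 (h.left_subset hA)
      rw [← hAa, ← card_sdiff_of_subset hAV, ← card_powersetCard]
      refine card_le_card fun B hB => ?_
      obtain ⟨hBV, hBb⟩ := mem_powersetCard.1 hB
      have hAB : Disjoint A B := disjoint_sdiff.mono_right hBV
      refine (mem_bipartiteAbove _).2 ⟨mem_sdiff.2 ⟨mem_powersetCard.2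
        ⟨hBV.trans sdiff_subset, hBb⟩, fun hBG => ?_⟩, hAB⟩
      exact not_disjoint_iff_nonempty_inter.2 (h.inter_nonempty A hA B hBG) hAB
    · obtain ⟨hBV, hBb⟩ := mem_powersetCard.1 (mem_sdiff.1 hB).1
      rw [← hBb, ← card_sdiff_of_subset hBV, ← card_powersetCard]
      refine card_le_card fun A hA => ?_
      obtain ⟨hAF, hAB⟩ := (mem_bipartiteBelow _).1 hA
      obtain ⟨hAV, hAa⟩ := mem_powersetCard.1 (h.left_subset hAF)
      exact mem_powersetCard.2 ⟨subset_sdiff.2 ⟨hAV, hAB⟩, hAa⟩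
  have hF : #F ≤ #(powersetCard b V \ G) := Nat.le_of_mul_le_mul_right
    (hcount.trans (Nat.mul_le_mul_left _ (choose_sub_le_choose_sub_of_le hab hV)))
    (Nat.choose_pos (by omega))
  have hG := card_le_card h.right_subset
  rw [card_sdiff_of_subset h.right_subset] at hF
  rw [card_powersetCard] at hF hG
  omega

theorem IsCrossIntersecting.card_add_card_add_choose_le_of_lt
    (h : IsCrossIntersecting V a b X Y) (hX : X.Nonempty) (hab : a < b) (hV : a + b ≤ #V) :
    #X + #Y + (#V - a).choose b ≤ (#V).choose b + 1 := by
  obtain ⟨A, hA⟩ := hX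
  have hA' := mem_powersetCard.1 (h.left_subset hA)
  induction a generalizing b V X Y A with
  | zero =>
    have hY : Y = ∅ := eq_empty_of_forall_notMem fun B hB => by
      simpa [card_eq_zero.1 hA'.2] using h.inter_nonempty A hA B hB
    have hX := card_le_card h.left_subset
    rw [card_powersetCard, Nat.choose_zero_right] at hX
    rw [hY, card_empty, Nat.sub_zero]
    omega
  | succ a ih =>
    obtain ⟨x, hx⟩ : A.Nonempty := card_pos.1 (by omega)
    have hVx := card_erase_add_one (hA'.1 hx)
    obtain ⟨b, rfl⟩ := Nat.exists_eq_add_of_lt hab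
    have h₁ := (h.nonMember_member x).card_add_card_le_choose (by omega) (by omega)
    have h₂ := ih (h.member_nonMember x) (by omega) (by omega) (A.erase x)
      (erase_mem_memberSubfamily hA hx)
      (mem_powersetCard.1 ((h.member_nonMember x).left_subset (erase_mem_memberSubfamily hA hx)))
    rw [← card_memberSubfamily_add_card_nonMemberSubfamily x X,
      ← card_memberSubfamily_add_card_nonMemberSubfamily x Y, ← hVx, Nat.choose_succ_succ',
      Nat.add_sub_add_right]
    simp only [Nat.add_sub_cancel] at h₁
    omega

theorem choose_add_choose_sub_le {N r : ℕ} (hN : 2 * r + 1 ≤ N) :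
    N.choose r + (N - r - 1).choose (r + 1) ≤ N.choose (r + 1) := by
  have h : IsCrossIntersecting (range N) r (r + 1) (powersetCard r (range N)) ∅ :=
    ⟨Subset.rfl, empty_subset _, by simp⟩
  have hHM := h.card_add_card_add_choose_le_of_lt
    (powersetCard_nonempty.2 (by rw [card_range]; omega)) (Nat.lt_succ_self r)
    (by rw [card_range]; omega)
  obtain ⟨m, rfl⟩ := Nat.exists_eq_add_of_le hN
  have hpos : 0 < (r + m).choose r := Nat.choose_pos (by omega)
  simp only [card_range, card_powersetCard, card_empty, add_zero] at hHM
  rw [show 2 * r + 1 + m - r = r + m + 1 by omega, Nat.choose_succ_succ'] at hHM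
  rw [show 2 * r + 1 + m - r - 1 = r + m by omega]
  omega

end Counting

section Compression

variable [DecidableEq α] {V A B : Finset α} {F G : Finset (Finset α)} {a b k : ℕ} {i j : α}

theorem compress_singleton_of_notMem_of_mem (hi : i ∉ A) (hj : j ∈ A) :
    compress {i} {j} A = insert i (A.erase j) := by
  have hij : i ≠ j := fun h => hi (h ▸ hj)
  rw [compress_of_disjoint_of_le (disjoint_singleton_left.2 hi) (singleton_subset_iff.2 hj),
    sup_eq_union, sdiff_singleton_eq_erase, erase_union_distrib,
    erase_eq_of_notMem (notMem_singleton.2 hij.symm), union_comm, insert_eq]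

theorem compress_singleton_cases (i j : α) (A : Finset α) :
    (i ∉ A ∧ j ∈ A ∧ compress {i} {j} A = insert i (A.erase j)) ∨
      compress {i} {j} A = A := by
  by_cases h : i ∉ A ∧ j ∈ A
  · exact .inl ⟨h.1, h.2, compress_singleton_of_notMem_of_mem h.1 h.2⟩
  · refine .inr (if_neg ?_)
    simpa only [disjoint_singleton_left, singleton_subset_iff] using h

theorem compress_singleton_subset (i j : α) (A : Finset α) :
    compress {i} {j} A ⊆ insert i A := by
  rcases compress_singleton_cases i j A with ⟨-, -, h⟩ | h <;> rw [h]
  · exact insert_subset_insert i (erase_subset j A)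
  · exact subset_insert i A

theorem mem_compression_singleton_cases (hA : A ∈ 𝓒 {i} {j} F) :
    (A ∈ F ∧ (i ∉ A → j ∈ A → insert i (A.erase j) ∈ F)) ∨
      ∃ B ∈ F, i ∉ B ∧ j ∈ B ∧ insert i (B.erase j) = A := by
  rcases mem_compression.1 hA with ⟨hA, hcA⟩ | ⟨hA, B, hB, rfl⟩
  · exact .inl ⟨hA, fun hi hj => by rwa [compress_singleton_of_notMem_of_mem hi hj] at hcA⟩
  · rcases compress_singleton_cases i j B with ⟨hi, hj, h⟩ | h
    · exact .inr ⟨B, hB, hi, hj, h.symm⟩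
    · exact absurd (by rwa [h]) hA

theorem compression_singleton_subset_powersetCard (hF : F ⊆ powersetCard k V) (hi : i ∈ V) :
    𝓒 {i} {j} F ⊆ powersetCard k V := by
  intro A hA
  rcases mem_compression_singleton_cases hA with ⟨hA, -⟩ | ⟨B, hB, hiB, hjB, rfl⟩
  · exact hF hA
  · obtain ⟨hBV, hBk⟩ := mem_powersetCard.1 (hF hB)
    exact mem_powersetCard.2 ⟨insert_subset hi ((erase_subset j B).trans hBV), by
      rw [card_insert_of_notMem fun h => hiB (mem_of_mem_erase h), card_erase_add_one hjB, hBk]⟩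

theorem inter_insert_erase_nonempty
    (hAB : (A ∩ B).Nonempty) (hAB' : i ∉ A → j ∈ A → (insert i (A.erase j) ∩ B).Nonempty)
    (hi : i ∉ B) : (A ∩ insert i (B.erase j)).Nonempty := by
  by_cases hiA : i ∈ A
  · exact ⟨i, mem_inter.2 ⟨hiA, mem_insert_self i _⟩⟩
  suffices ∃ z ∈ A, z ∈ B ∧ z ≠ j by
    obtain ⟨z, hzA, hzB, hzj⟩ := this
    exact ⟨z, mem_inter.2 ⟨hzA, mem_insert_of_mem (mem_erase.2 ⟨hzj, hzB⟩)⟩⟩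
  by_cases hjA : j ∈ A
  · obtain ⟨z, hz⟩ := hAB' hiA hjA
    grind
  · obtain ⟨z, hz⟩ := hAB
    grind

theorem IsCrossIntersecting.compression (h : IsCrossIntersecting V a b F G) (hi : i ∈ V)
    (j : α) : IsCrossIntersecting V a b (𝓒 {i} {j} F) (𝓒 {i} {j} G) where
  left_subset := compression_singleton_subset_powersetCard h.left_subset hi
  right_subset := compression_singleton_subset_powersetCard h.right_subset hi
  inter_nonempty A hA B hB := by
    rcases mem_compression_singleton_cases hA with ⟨hA, hA'⟩ | ⟨C, hC, hiC, -, rfl⟩ <;>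
      rcases mem_compression_singleton_cases hB with ⟨hB, hB'⟩ | ⟨D, hD, hiD, -, rfl⟩
    · exact h.inter_nonempty A hA B hB
    · exact inter_insert_erase_nonempty (h.inter_nonempty A hA D hD)
        (fun hi hj => h.inter_nonempty _ (hA' hi hj) D hD) hiD
    · rw [inter_comm]
      exact inter_insert_erase_nonempty (h.symm.inter_nonempty B hB C hC)
        (fun hi hj => h.symm.inter_nonempty _ (hB' hi hj) C hC) hiC
    · exact ⟨i, mem_inter.2 ⟨mem_insert_self i _, mem_insert_self i _⟩⟩

theorem IsNontrivialFamily.compression (h : IsNontrivialFamily F)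
    (hij : ¬ IsTransversal {i, j} F) : IsNontrivialFamily (𝓒 {i} {j} F) := by
  intro x
  suffices ∃ A ∈ F, x ∉ compress {i} {j} A by
    obtain ⟨A, hA, hx⟩ := this
    exact ⟨_, compress_mem_compression hA, hx⟩
  by_cases hx : x = i
  · subst hx
    simp only [IsTransversal, not_forall, not_nonempty_iff_eq_empty] at hij
    obtain ⟨A, hA, hAij⟩ := hij
    refine ⟨A, hA, ?_⟩
    rcases compress_singleton_cases x j A with ⟨-, hj, -⟩ | hc
    · exact absurd hAij (Nonempty.ne_empty ⟨j, by simp [hj]⟩)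
    · rw [hc]
      exact fun hxA => Nonempty.ne_empty ⟨x, by simp [hxA]⟩ hAij
  · obtain ⟨A, hA, hxA⟩ := h x
    exact ⟨A, hA, fun hxc => (mem_insert.1 (compress_singleton_subset i j A hxc)).elim hx hxA⟩

theorem sum_compression_lt {u v : Finset α} {f : Finset α → ℕ}
    (hf : ∀ A ∈ F, compress u v A ∉ F → f (compress u v A) < f A) (hF : 𝓒 u v F ≠ F) :
    ∑ A ∈ 𝓒 u v F, f A < ∑ A ∈ F, f A := by
  have hmoved : {A ∈ F | compress u v A ∉ F}.Nonempty := by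
    by_contra! h
    rw [filter_eq_empty_iff] at h
    exact hF (eq_of_subset_of_card_le
      (fun A hA => not_not.1 fun hAF => by
        obtain ⟨B, hB, hBA⟩ := ((mem_compression.1 hA).resolve_left fun h => hAF h.1).2
        exact h hB (hBA ▸ hAF))
      (card_compression u v F).ge)
  rw [compression, sum_union compress_disjoint, filter_image, sum_image compress_injOn,
    ← sum_filter_add_sum_filter_not F (compress u v · ∈ F)]
  exact Nat.add_lt_add_left (sum_lt_sum_of_nonempty hmoved fun A hA =>
    hf A (mem_filter.1 hA).1 (mem_filter.1 hA).2) _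

end Compression

section Shifted

variable [LinearOrder α] {V W A I J : Finset α} {F G : Finset (Finset α)}
  {a b k m : ℕ} {x : α}

/-- `I` consists of the smallest elements of `V`. -/
def IsInitialSegment (I V : Finset α) : Prop :=
  I ⊆ V ∧ ∀ x ∈ I, ∀ y ∈ V, y ∉ I → x < y

theorem IsInitialSegment.exists_forall_le (hI : IsInitialSegment I V) (hIV : #I < #V) :
    ∃ x ∈ V, x ∉ I ∧ ∀ y ∈ V, y ≤ x := by
  obtain ⟨z, hz, hzI⟩ := exists_mem_notMem_of_card_lt_card hIV
  have hmax := fun y hy => le_max' V y hy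
  exact ⟨V.max' ⟨z, hz⟩, max'_mem V _,
    fun h => (hI.2 _ h z hz hzI).not_ge (hmax z hz), hmax⟩

theorem exists_isInitialSegment_card_eq (hm : m ≤ #V) : ∃ I, IsInitialSegment I V ∧ #I = m := by
  induction V using induction_on_max generalizing m with
  | empty => exact ⟨∅, ⟨Subset.rfl, by simp⟩, (Nat.eq_zero_of_le_zero hm).symm⟩
  | insert x V hx ih =>
    have hxV : x ∉ V := fun h => lt_irrefl x (hx x h)
    rw [card_insert_of_notMem hxV] at hm
    rcases hm.eq_or_lt with rfl | hm
    · exact ⟨insert x V, ⟨Subset.rfl, fun _ _ y hy hy' => absurd hy hy'⟩,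
        card_insert_of_notMem hxV⟩
    · obtain ⟨I, ⟨hIV, hI⟩, hIm⟩ := ih (Nat.le_of_lt_succ hm)
      refine ⟨I, ⟨hIV.trans (subset_insert x V), fun y hy z hz hzI => ?_⟩, hIm⟩
      rcases mem_insert.1 hz with rfl | hz
      · exact hx y (hIV hy)
      · exact hI y hy z hz hzI

variable [DecidableEq α]

/-- A family is shifted on `V` if replacing an element of a member by a smaller element of `V`
outside it always gives a member. -/
def IsShifted (V : Finset α) (F : Finset (Finset α)) : Prop :=
  ∀ A ∈ F, ∀ i ∈ V, ∀ j ∈ A, i < j → i ∉ A → insert i (A.erase j) ∈ F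

theorem isShifted_of_forall_compression_eq
    (h : ∀ i ∈ V, ∀ j, i < j → 𝓒 {i} {j} F = F) : IsShifted V F := by
  intro A hA i hi j hj hij hiA
  rw [← compress_singleton_of_notMem_of_mem hiA hj, ← h i hi j hij]
  exact compress_mem_compression hA

theorem sum_rank_compress_lt {i j : α} (hi : i ∈ V) (hij : i < j)
    (hA : compress {i} {j} A ≠ A) :
    ∑ x ∈ compress {i} {j} A, #{y ∈ V | y < x} < ∑ x ∈ A, #{y ∈ V | y < x} := by
  obtain ⟨hiA, hjA, h⟩ := (compress_singleton_cases i j A).resolve_right hA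
  rw [h, sum_insert fun h => hiA (mem_of_mem_erase h), ← add_sum_erase A _ hjA]
  have hsub : {y ∈ V | y < i} ⊂ {y ∈ V | y < j} :=
    (ssubset_iff_of_subset (monotone_filter_right V fun _ _ hy => hy.trans hij)).2
      ⟨i, mem_filter.2 ⟨hi, hij⟩, fun h => lt_irrefl i (mem_filter.1 h).2⟩
  exact Nat.add_lt_add_right (card_lt_card hsub) _

theorem sum_sum_rank_compression_lt {i j : α} (hi : i ∈ V) (hij : i < j)
    (hF : 𝓒 {i} {j} F ≠ F) :
    ∑ A ∈ 𝓒 {i} {j} F, ∑ x ∈ A, #{y ∈ V | y < x} < ∑ A ∈ F, ∑ x ∈ A, #{y ∈ V | y < x} :=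
  sum_compression_lt (fun _ hA hcA => sum_rank_compress_lt hi hij fun h => hcA (h.symm ▸ hA)) hF

theorem exists_isShifted {Q : Finset (Finset α) → Finset (Finset α) → Prop}
    (hQ : ∀ i ∈ V, ∀ j, i < j → ∀ F G, Q F G → Q (𝓒 {i} {j} F) (𝓒 {i} {j} G)) (h : Q F G) :
    ∃ F' G', Q F' G' ∧ IsShifted V F' ∧ IsShifted V G' := by
  induction hN : ∑ A ∈ F, ∑ x ∈ A, #{y ∈ V | y < x} + ∑ A ∈ G, ∑ x ∈ A, #{y ∈ V | y < x}
    using Nat.strong_induction_on generalizing F G with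
  | _ N ih =>
    by_cases hfix : ∀ i ∈ V, ∀ j, i < j → 𝓒 {i} {j} F = F ∧ 𝓒 {i} {j} G = G
    · exact ⟨F, G, h, isShifted_of_forall_compression_eq fun i hi j hij => (hfix i hi j hij).1,
        isShifted_of_forall_compression_eq fun i hi j hij => (hfix i hi j hij).2⟩
    push Not at hfix
    obtain ⟨i, hi, j, hij, hne⟩ := hfix
    refine ih _ ?_ (hQ i hi j hij F G h) rfl
    rw [← hN]
    by_cases hF : 𝓒 {i} {j} F = F
    · rw [hF]
      exact Nat.add_lt_add_left (sum_sum_rank_compression_lt hi hij (hne hF)) _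
    · refine Nat.add_lt_add_of_lt_of_le (sum_sum_rank_compression_lt hi hij hF) ?_
      by_cases hG : 𝓒 {i} {j} G = G
      · rw [hG]
      · exact (sum_sum_rank_compression_lt hi hij hG).le

theorem IsShifted.memberSubfamily (h : IsShifted V F) (x : α) :
    IsShifted (V.erase x) (F.memberSubfamily x) := by
  intro A hA i hi j hj hij hiA
  obtain ⟨hA, hxA⟩ := mem_memberSubfamily.1 hA
  obtain ⟨hix, hi⟩ := mem_erase.1 hi
  have hxj : x ≠ j := fun h => hxA (h ▸ hj)
  have hshift := h _ hA i hi j (mem_insert_of_mem hj) hij (by simp [hix, hiA])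
  rw [erase_insert_of_ne hxj, insert_comm] at hshift
  exact mem_memberSubfamily.2 ⟨hshift, by simp [hix.symm, hxA]⟩

theorem IsShifted.nonMemberSubfamily (h : IsShifted V F) (x : α) :
    IsShifted (V.erase x) (F.nonMemberSubfamily x) := by
  intro A hA i hi j hj hij hiA
  obtain ⟨hA, hxA⟩ := mem_nonMemberSubfamily.1 hA
  obtain ⟨hix, hi⟩ := mem_erase.1 hi
  exact mem_nonMemberSubfamily.2 ⟨h A hA i hi j hj hij hiA, by simp [hix.symm, hxA]⟩

theorem IsInitialSegment.erase (hI : IsInitialSegment I V) (hx : x ∉ I) :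
    IsInitialSegment I (V.erase x) :=
  ⟨subset_erase.2 ⟨hI.1, hx⟩, fun y hy z hz => hI.2 y hy z (mem_of_mem_erase hz)⟩

theorem IsInitialSegment.erase_erase (hI : IsInitialSegment I V) (x : α) :
    IsInitialSegment (I.erase x) (V.erase x) := by
  refine ⟨erase_subset_erase x hI.1, fun y hy z hz hzI => ?_⟩
  obtain ⟨hzx, hz⟩ := mem_erase.1 hz
  exact hI.2 y (mem_of_mem_erase hy) z hz fun h => hzI (mem_erase.2 ⟨hzx, h⟩)

theorem IsShifted.initialSegment_mem (h : IsShifted V F) (hF : F ⊆ powersetCard k V)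
    (hJ : IsInitialSegment J W) (hJk : #J = k) (hWV : W ⊆ V) (hA : A ∈ F) (hAW : A ⊆ W) :
    J ∈ F := by
  induction hN : #(J \ A) generalizing A with
  | zero =>
    have hAk := (mem_powersetCard.1 (hF hA)).2
    rwa [eq_of_subset_of_card_le (sdiff_eq_empty_iff_subset.1 (card_eq_zero.1 hN))
      (hAk.trans hJk.symm).le]
  | succ N ih =>
    have hAk := (mem_powersetCard.1 (hF hA)).2
    obtain ⟨i, hi⟩ : (J \ A).Nonempty := card_pos.1 (by omega)
    obtain ⟨hiJ, hiA⟩ := mem_sdiff.1 hi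
    obtain ⟨j, hj⟩ : (A \ J).Nonempty :=
      card_pos.1 (by rw [card_sdiff_comm (hAk.trans hJk.symm)]; omega)
    obtain ⟨hjA, hjJ⟩ := mem_sdiff.1 hj
    refine ih (h A hA i (hWV (hJ.1 hiJ)) j hjA (hJ.2 i hiJ j (hAW hjA) hjJ) hiA)
      (insert_subset (hJ.1 hiJ) ((erase_subset j A).trans hAW)) ?_
    have hsdiff : J \ insert i (A.erase j) = (J \ A).erase i := by
      ext z
      have : z ∈ J → z ≠ j := fun hz hzj => hjJ (hzj ▸ hz)
      simp only [mem_sdiff, mem_insert, mem_erase]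
      tauto
    rw [hsdiff, card_erase_of_mem hi, hN, Nat.add_sub_cancel]

theorem IsCrossIntersecting.member_member (h : IsCrossIntersecting V a b F G)
    (hF : IsShifted V F) (hV : a + b ≤ #V) (hx : ∀ y ∈ V, y ≤ x) :
    IsCrossIntersecting (V.erase x) (a - 1) (b - 1) (F.memberSubfamily x)
      (G.memberSubfamily x) where
  left_subset := memberSubfamily_subset_powersetCard h.left_subset x
  right_subset := memberSubfamily_subset_powersetCard h.right_subset x
  inter_nonempty A hA B hB := by
    have hAa := (mem_powersetCard.1 (memberSubfamily_subset_powersetCard h.left_subset x hA)).2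
    have hBb := (mem_powersetCard.1 (memberSubfamily_subset_powersetCard h.right_subset x hB)).2
    obtain ⟨hA, hxA⟩ := mem_memberSubfamily.1 hA
    obtain ⟨hB, hxB⟩ := mem_memberSubfamily.1 hB
    have ha := (mem_powersetCard.1 (h.left_subset hA)).2
    have hb := (mem_powersetCard.1 (h.right_subset hB)).2
    rw [card_insert_of_notMem hxA] at ha
    rw [card_insert_of_notMem hxB] at hb
    obtain ⟨y, hyV, hy⟩ : ∃ y ∈ V, y ∉ insert x (A ∪ B) := by
      refine exists_mem_notMem_of_card_lt_card ?_
      have h₁ := card_insert_le x (A ∪ B)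
      have h₂ := card_union_le A B
      omega
    simp only [mem_insert, mem_union, not_or] at hy
    have hshift := hF _ hA y hyV x (mem_insert_self x A) (lt_of_le_of_ne (hx y hyV) hy.1)
      (by simp [hy])
    rw [erase_insert hxA] at hshift
    obtain ⟨z, hz⟩ := h.inter_nonempty _ hshift _ hB
    exact ⟨z, by grind⟩

end Shifted

section ThickSets

variable [DecidableEq α] {V I A : Finset α} {F G T : Finset (Finset α)} {e k : ℕ} {x : α}

/-- The `k`-subsets of `V` that meet `I` in more than `e` elements. For `I` of size `k + e` these
are the competitors in the Hilton–Milner theorem (`e = 0`) and in its non-trivial version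
(`e = 1`). -/
def thickSets (I : Finset α) (e : ℕ) (V : Finset α) (k : ℕ) : Finset (Finset α) :=
  {A ∈ powersetCard k V | e < #(A ∩ I)}

theorem mem_thickSets : A ∈ thickSets I e V k ↔ (A ⊆ V ∧ #A = k) ∧ e < #(A ∩ I) := by
  rw [thickSets, mem_filter, mem_powersetCard]

theorem memberSubfamily_thickSets (hxV : x ∈ V) (hxI : x ∉ I) :
    (thickSets I e V k).memberSubfamily x = thickSets I e (V.erase x) (k - 1) := by
  ext A
  rw [mem_memberSubfamily, mem_thickSets, mem_thickSets, insert_inter_of_notMem hxI]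
  constructor
  · rintro ⟨⟨⟨hAV, hAk⟩, hAI⟩, hxA⟩
    rw [card_insert_of_notMem hxA] at hAk
    exact ⟨⟨subset_erase.2 ⟨(subset_insert x A).trans hAV, hxA⟩, by omega⟩, hAI⟩
  · rintro ⟨⟨hAV, hAk⟩, hAI⟩
    obtain ⟨hAV, hxA⟩ := subset_erase.1 hAV
    have hcard := card_le_card (inter_subset_left : A ∩ I ⊆ A)
    exact ⟨⟨⟨insert_subset hxV hAV, by rw [card_insert_of_notMem hxA]; omega⟩, hAI⟩, hxA⟩

theorem nonMemberSubfamily_thickSets :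
    (thickSets I e V k).nonMemberSubfamily x = thickSets I e (V.erase x) k := by
  ext A
  simp only [mem_nonMemberSubfamily, mem_thickSets, subset_erase]
  tauto

theorem card_thickSets_erase_add (hxV : x ∈ V) (hxI : x ∉ I) :
    #(thickSets I e (V.erase x) (k - 1)) + #(thickSets I e (V.erase x) k) =
      #(thickSets I e V k) := by
  rw [← memberSubfamily_thickSets hxV hxI, ← nonMemberSubfamily_thickSets,
    card_memberSubfamily_add_card_nonMemberSubfamily]

theorem memberSubfamily_mono (h : F ⊆ G) (x : α) : F.memberSubfamily x ⊆ G.memberSubfamily x :=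
  fun A hA => by
    rw [mem_memberSubfamily] at hA ⊢
    exact ⟨h hA.1, hA.2⟩

theorem card_filter_card_inter_eq (hI : I ⊆ V) {j : ℕ} (hj : j ≤ k) :
    #{A ∈ powersetCard k V | #(A ∩ I) = j} = (#I).choose j * (#V - #I).choose (k - j) := by
  have hinter : ∀ P ⊆ I, ∀ Q, Disjoint Q I → (P ∪ Q) ∩ I = P := fun P hP Q hQ => by
    rw [union_inter_distrib_right, disjoint_iff_inter_eq_empty.1 hQ, union_empty,
      inter_eq_left.2 hP]
  rw [← card_sdiff_of_subset hI, ← card_powersetCard, ← card_powersetCard, ← card_product]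
  refine card_nbij' (fun A => (A ∩ I, A \ I)) (fun P => P.1 ∪ P.2) ?_ ?_ ?_ ?_
  · intro A hA
    simp only [mem_coe, mem_filter, mem_powersetCard] at hA
    simp only [coe_product, Set.mem_prod, mem_coe, mem_powersetCard]
    have := card_inter_add_card_sdiff A I
    exact ⟨⟨inter_subset_right, hA.2⟩, sdiff_subset_sdiff hA.1.1 Subset.rfl, by omega⟩
  · rintro ⟨P, Q⟩ hPQ
    simp only [coe_product, Set.mem_prod, mem_coe, mem_powersetCard, subset_sdiff] at hPQ
    obtain ⟨⟨hPI, hPj⟩, ⟨hQV, hQI⟩, hQk⟩ := hPQ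
    simp only [mem_coe, mem_filter, mem_powersetCard]
    refine ⟨⟨union_subset (hPI.trans hI) hQV, ?_⟩, by rw [hinter P hPI Q hQI, hPj]⟩
    rw [card_union_of_disjoint (hQI.symm.mono_left hPI)]
    omega
  · exact fun A _ => (union_comm _ _).trans (sdiff_union_inter A I)
  · rintro ⟨P, Q⟩ hPQ
    simp only [coe_product, Set.mem_prod, mem_coe, mem_powersetCard, subset_sdiff] at hPQ
    obtain ⟨⟨hPI, -⟩, ⟨-, hQI⟩, -⟩ := hPQ
    refine Prod.ext (hinter P hPI Q hQI) ?_
    change (P ∪ Q) \ I = Q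
    rw [union_sdiff_distrib, sdiff_eq_empty_iff_subset.2 hPI, empty_union,
      sdiff_eq_self_of_disjoint hQI]

theorem card_thickSets_add_sum (hI : I ⊆ V) (he : e ≤ k) :
    #(thickSets I e V k) +
      ∑ j ∈ range (e + 1), (#I).choose j * (#V - #I).choose (k - j) = (#V).choose k := by
  have hthin : #{A ∈ powersetCard k V | ¬ e < #(A ∩ I)} =
      ∑ j ∈ range (e + 1), (#I).choose j * (#V - #I).choose (k - j) := by
    rw [card_eq_sum_card_fiberwise (f := fun A => #(A ∩ I)) (t := range (e + 1))
      fun A hA => mem_coe.2 (mem_range_succ_iff.2 (not_lt.1 (mem_filter.1 hA).2))]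
    refine sum_congr rfl fun j hj => ?_
    have hje : j ≤ e := Nat.le_of_lt_succ (mem_range.1 hj)
    rw [← card_filter_card_inter_eq hI (hje.trans he), filter_filter]
    congr 1
    exact filter_congr fun A _ => ⟨fun h => h.2, fun h => ⟨not_lt.2 (h.trans_le hje), h⟩⟩
  rw [← hthin, thickSets, card_filter_add_card_filter_not, card_powersetCard]

theorem IsCrossIntersecting.card_add_card_le_of_sdiff_mem {a b : ℕ}
    (h : IsCrossIntersecting V a b F G) (hG : G ⊆ T) (hF : ∀ A ∈ F, V \ A ∈ T) :
    #F + #G ≤ #T := by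
  have hFT : #F ≤ #(T \ G) := by
    refine card_le_card_of_injOn (V \ ·) (fun A hA => mem_sdiff.2 ⟨hF A hA, fun hAG => ?_⟩) ?_
    · exact not_disjoint_iff_nonempty_inter.2 (h.inter_nonempty A hA _ hAG) disjoint_sdiff
    · intro A hA B hB hAB
      rw [← Finset.sdiff_sdiff_eq_self (mem_powersetCard.1 (h.left_subset hA)).1,
        ← Finset.sdiff_sdiff_eq_self (mem_powersetCard.1 (h.left_subset hB)).1]
      exact congrArg (V \ ·) hAB
  rw [card_sdiff_of_subset hG] at hFT
  have := card_le_card hG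
  omega

theorem IsCrossIntersecting.card_add_card_le_card_thickSets_self {r : ℕ}
    (h : IsCrossIntersecting V r r F G)
    (hFI : F ⊆ thickSets V e V r) (hGI : G ⊆ thickSets V e V r) (hr : 2 * r ≤ #V) :
    #F + #G ≤ #(thickSets V e V r) := by
  have hinter : ∀ A ∈ powersetCard r V, #(A ∩ V) = r := fun A hA => by
    rw [inter_eq_left.2 (mem_powersetCard.1 hA).1, (mem_powersetCard.1 hA).2]
  by_cases her : e < r
  · have hall : thickSets V e V r = powersetCard r V :=
      filter_true_of_mem fun A hA => by rwa [hinter A hA]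
    rw [hall, card_powersetCard]
    exact h.card_add_card_le_choose le_rfl (by omega)
  · have hnone : thickSets V e V r = ∅ :=
      filter_false_of_mem fun A hA => by rwa [hinter A hA]
    rw [hnone, subset_empty] at hFI hGI
    simp [hFI, hGI]

/- The Erdős–Ko–Rado bound: when `#V = 2 * k`, exactly `(k + e).choose e` of the `k`-subsets of
`V` are not thick. -/
theorem IsCrossIntersecting.card_add_card_le_card_thickSets_add_of_card_eq
    (h : IsCrossIntersecting V k k F G) (hI : I ⊆ V) (hIe : #I = k + e) (hek : e ≤ k)
    (hV : #V = 2 * k) : #F + #G ≤ #(thickSets I e V k) + (k + e).choose e := by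
  have hEKR := h.card_add_card_le_choose le_rfl (by omega)
  have hsum := card_thickSets_add_sum hI hek
  rw [sum_range_succ, sum_eq_zero fun j hj => ?_, hIe, show #V - (k + e) = k - e by omega,
    Nat.choose_self, zero_add, mul_one] at hsum
  · omega
  · have := mem_range.1 hj
    rw [Nat.choose_eq_zero_of_lt (n := #V - #I) (by omega), mul_zero]

end ThickSets

section ShiftedThick

variable [LinearOrder α] [DecidableEq α] {V I : Finset α} {F G : Finset (Finset α)} {e k r : ℕ}

theorem IsCrossIntersecting.card_add_card_le_card_thickSets (h : IsCrossIntersecting V r r F G)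
    (hF : IsShifted V F) (hI : IsInitialSegment I V) (hFI : F ⊆ thickSets I e V r)
    (hGI : G ⊆ thickSets I e V r) (hrI : r + e < #I) (hr : 2 * r ≤ #V) :
    #F + #G ≤ #(thickSets I e V r) := by
  induction hN : #V generalizing V r F G with
  | zero =>
    have := card_le_card hI.1
    omega
  | succ N ih =>
    rcases (card_le_card hI.1).eq_or_lt with hIV | hIV
    · obtain rfl := eq_of_subset_of_card_le hI.1 hIV.ge
      exact h.card_add_card_le_card_thickSets_self hFI hGI hr
    rcases hr.eq_or_lt with hr | hr
    · refine h.card_add_card_le_of_sdiff_mem hGI fun A hA => ?_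
      obtain ⟨hAV, hAr⟩ := mem_powersetCard.1 (h.left_subset hA)
      refine mem_thickSets.2 ⟨⟨sdiff_subset, by rw [card_sdiff_of_subset hAV]; omega⟩, ?_⟩
      rw [sdiff_inter_right_comm, inter_eq_right.2 hI.1]
      have := le_card_sdiff A I
      omega
    obtain ⟨x, hxV, hxI, hxmax⟩ := hI.exists_forall_le hIV
    have hVx := card_erase_add_one hxV
    have hnon := ih (h.nonMember_nonMember x) (hF.nonMemberSubfamily x) (hI.erase hxI)
      (nonMemberSubfamily_thickSets (x := x) ▸ filter_subset_filter _ hFI)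
      (nonMemberSubfamily_thickSets (x := x) ▸ filter_subset_filter _ hGI)
      hrI (by omega) (by omega)
    have hmem := ih (h.member_member hF (by omega) hxmax) (hF.memberSubfamily x) (hI.erase hxI)
      (memberSubfamily_thickSets hxV hxI ▸ memberSubfamily_mono hFI x)
      (memberSubfamily_thickSets hxV hxI ▸ memberSubfamily_mono hGI x)
      (by omega) (by omega) (by omega)
    rw [← card_memberSubfamily_add_card_nonMemberSubfamily x F,
      ← card_memberSubfamily_add_card_nonMemberSubfamily x G, ← card_thickSets_erase_add hxV hxI]
    omega

theorem IsCrossIntersecting.card_add_card_le_card_thickSets_add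
    (h : IsCrossIntersecting V k k F G) (hF : IsShifted V F) (hI : IsInitialSegment I V)
    (hFI : F ⊆ thickSets I e V k) (hGI : G ⊆ thickSets I e V k) (hIe : #I = k + e)
    (hk : 0 < k) (hek : e ≤ k) (hV : 2 * k ≤ #V) :
    #F + #G ≤ #(thickSets I e V k) + (k + e).choose e := by
  induction hN : #V using Nat.strong_induction_on generalizing V F G with
  | _ N ih =>
    rcases hV.eq_or_lt with hV | hV
    · exact h.card_add_card_le_card_thickSets_add_of_card_eq hI.1 hIe hek hV.symm
    obtain ⟨x, hxV, hxI, hxmax⟩ := hI.exists_forall_le (by omega)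
    have hVx := card_erase_add_one hxV
    have hnon := ih #(V.erase x) (by omega) (h.nonMember_nonMember x)
      (hF.nonMemberSubfamily x) (hI.erase hxI)
      (nonMemberSubfamily_thickSets (x := x) ▸ filter_subset_filter _ hFI)
      (nonMemberSubfamily_thickSets (x := x) ▸ filter_subset_filter _ hGI) (by omega) rfl
    have hmem := (h.member_member hF (by omega) hxmax).card_add_card_le_card_thickSets
      (hF.memberSubfamily x) (hI.erase hxI)
      (memberSubfamily_thickSets hxV hxI ▸ memberSubfamily_mono hFI x)
      (memberSubfamily_thickSets hxV hxI ▸ memberSubfamily_mono hGI x) (by omega) (by omega)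
    rw [← card_memberSubfamily_add_card_nonMemberSubfamily x F,
      ← card_memberSubfamily_add_card_nonMemberSubfamily x G, ← card_thickSets_erase_add hxV hxI]
    omega

end ShiftedThick

section HiltonMilner

theorem IsCrossIntersecting.card_add_card_add_choose_le_of_isShifted [LinearOrder α]
    [DecidableEq α] {V : Finset α} {F G : Finset (Finset α)} {k : ℕ}
    (h : IsCrossIntersecting V k k F G) (hFs : IsShifted V F) (hGs : IsShifted V G)
    (hF : F.Nonempty) (hG : G.Nonempty) (hV : 2 * k ≤ #V) :
    #F + #G + (#V - k).choose k ≤ (#V).choose k + 1 := by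
  obtain ⟨A, hA⟩ := hF
  obtain ⟨B, hB⟩ := hG
  have hAk := mem_powersetCard.1 (h.left_subset hA)
  have hBk := mem_powersetCard.1 (h.right_subset hB)
  have hk : 0 < k := by
    rw [← hAk.2]
    exact ((h.inter_nonempty A hA B hB).mono inter_subset_left).card_pos
  obtain ⟨I, hI, hIk⟩ := exists_isInitialSegment_card_eq (V := V) (m := k) (by omega)
  have hIF := hFs.initialSegment_mem h.left_subset hI hIk Subset.rfl hA hAk.1
  have hIG := hGs.initialSegment_mem h.right_subset hI hIk Subset.rfl hB hBk.1
  have hle := h.card_add_card_le_card_thickSets_add (e := 0) hFs hI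
    (fun C hC => mem_filter.2 ⟨h.left_subset hC, (h.inter_nonempty C hC I hIG).card_pos⟩)
    (fun C hC => mem_filter.2 ⟨h.right_subset hC, (h.isTransversal hIF C hC).card_pos⟩)
    hIk hk (Nat.zero_le k) hV
  have hcard := card_thickSets_add_sum hI.1 (Nat.zero_le k)
  rw [zero_add, sum_range_one, hIk, Nat.choose_zero_right, one_mul, Nat.sub_zero] at hcard
  rw [Nat.choose_zero_right] at hle
  omega

variable [DecidableEq α] {V : Finset α} {F G : Finset (Finset α)} {a b k : ℕ}

theorem IsCrossIntersecting.card_add_card_add_choose_le_of_eq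
    (h : IsCrossIntersecting V k k F G) (hF : F.Nonempty) (hG : G.Nonempty) (hV : 2 * k ≤ #V) :
    #F + #G + (#V - k).choose k ≤ (#V).choose k + 1 := by
  classical
  let _ : LinearOrder α := linearOrderOfSTO WellOrderingRel
  obtain ⟨F', G', ⟨h', hF', hG'⟩, hFs, hGs⟩ := exists_isShifted (V := V)
    (Q := fun X Y => IsCrossIntersecting V k k X Y ∧ #X = #F ∧ #Y = #G)
    (fun i hi j _ X Y hXY => ⟨hXY.1.compression hi j, (card_compression _ _ X).trans hXY.2.1,
      (card_compression _ _ Y).trans hXY.2.2⟩) ⟨h, rfl, rfl⟩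
  rw [← hF', ← hG']
  exact h'.card_add_card_add_choose_le_of_isShifted hFs hGs
    (card_pos.1 (hF' ▸ hF.card_pos)) (card_pos.1 (hG' ▸ hG.card_pos)) hV

theorem IsCrossIntersecting.hilton_milner (h : IsCrossIntersecting V a b F G) (hF : F.Nonempty)
    (hab : a ≤ b) (hG : a = b → G.Nonempty) (hV : a + b ≤ #V) :
    #F + #G + (#V - a).choose b ≤ (#V).choose b + 1 := by
  rcases hab.eq_or_lt with rfl | hab
  · exact h.card_add_card_add_choose_le_of_eq hF (hG rfl) (by omega)
  · exact h.card_add_card_add_choose_le_of_lt hF hab hV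

end HiltonMilner

section ShiftedNontrivial

theorem choose_succ_add_le_choose_sub_add {m s t : ℕ} (hs : 0 < s) (hsm : s ≤ m) (htm : t ≤ m) :
    m.choose (s + 1) + t ≤ (m - t).choose (s + 1) + t * m.choose s := by
  induction t with
  | zero => simp
  | succ t ih =>
    have ih := ih (by omega)
    have hlt := choose_lt_choose hs hsm (show m - (t + 1) < m by omega)
    rw [show m - t = m - (t + 1) + 1 by omega, Nat.choose_succ_succ'] at ih
    rw [add_one_mul]
    omega

theorem subset_thickSets_one [DecidableEq α] {V I : Finset α} {F : Finset (Finset α)} {k : ℕ}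
    (hF : F ⊆ powersetCard k V) (hI : I.Nonempty) (h : ∀ x ∈ I, IsTransversal (I.erase x) F) :
    F ⊆ thickSets I 1 V k := by
  intro A hA
  obtain ⟨x, hx⟩ := hI
  obtain ⟨y, hy⟩ := h x hx A hA
  rw [mem_inter, mem_erase] at hy
  obtain ⟨z, hz⟩ := h y hy.2.2 A hA
  rw [mem_inter, mem_erase] at hz
  exact mem_filter.2 ⟨hF hA, one_lt_card.2
    ⟨z, mem_inter.2 ⟨hz.1, hz.2.2⟩, y, mem_inter.2 ⟨hy.1, hy.2.2⟩, hz.2.1⟩⟩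

variable [LinearOrder α] [DecidableEq α] {V I : Finset α} {F G : Finset (Finset α)} {k : ℕ}

theorem IsShifted.erase_mem_of_isNontrivialFamily (h : IsShifted V F)
    (hF : F ⊆ powersetCard k V) (hFn : IsNontrivialFamily F) (hI : IsInitialSegment I V)
    (hIk : #I = k + 1) {x : α} (hx : x ∈ I) : I.erase x ∈ F := by
  obtain ⟨A, hA, hxA⟩ := hFn x
  exact h.initialSegment_mem hF (hI.erase_erase x) (by rw [card_erase_of_mem hx]; omega)
    (erase_subset x V) hA (subset_erase.2 ⟨(mem_powersetCard.1 (hF hA)).1, hxA⟩)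

theorem IsCrossIntersecting.card_add_card_le_of_isShifted_of_isNontrivialFamily
    (h : IsCrossIntersecting V k k F G) (hFs : IsShifted V F) (hGs : IsShifted V G)
    (hF : IsNontrivialFamily F) (hG : IsNontrivialFamily G) (hk : 2 ≤ k) (hV : 2 * k < #V) :
    #F + #G + 2 * (#V - k).choose k ≤ (#V).choose k + (#V - 2 * k).choose k + 2 := by
  obtain ⟨I, hI, hIk⟩ := exists_isInitialSegment_card_eq (V := V) (m := k + 1) (by omega)
  have hI₀ : I.Nonempty := card_pos.1 (by omega)
  have hle := h.card_add_card_le_card_thickSets_add hFs hI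
    (subset_thickSets_one h.left_subset hI₀ fun x hx => h.symm.isTransversal
      (hGs.erase_mem_of_isNontrivialFamily h.right_subset hG hI hIk hx))
    (subset_thickSets_one h.right_subset hI₀ fun x hx => h.isTransversal
      (hFs.erase_mem_of_isNontrivialFamily h.left_subset hF hI hIk hx))
    hIk (by omega) (by omega) hV.le
  have hcard := card_thickSets_add_sum hI.1 (show 1 ≤ k by omega)
  obtain ⟨k, rfl⟩ : ∃ l, k = l + 1 := ⟨k - 1, by omega⟩
  obtain ⟨m, hm⟩ : ∃ m, #V = m + (k + 2) := ⟨#V - (k + 2), by omega⟩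
  have hnum := choose_succ_add_le_choose_sub_add (m := m) (s := k) (t := k)
    (by omega) (by omega) (by omega)
  have hpascal := Nat.choose_succ_succ' m k
  simp only [sum_range_succ, sum_range_zero, hIk, hm, Nat.choose_zero_right, Nat.choose_one_right,
    show m + (k + 2) - (k + 1 + 1) = m by omega, Nat.add_sub_cancel, Nat.sub_zero, one_mul,
    zero_add] at hcard
  rw [Nat.choose_one_right] at hle
  rw [hm]
  rw [show m + (k + 2) - (k + 1) = m + 1 by omega, show m + (k + 2) - 2 * (k + 1) = m - k by omega]
  linarith

end ShiftedNontrivial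

section PairTransversal

variable [DecidableEq α] {V A B : Finset α} {F G X Y : Finset (Finset α)} {a b k q r : ℕ}

theorem IsCrossIntersecting.card_add_card_add_choose_le_of_isTransversal
    (h : IsCrossIntersecting V a b X Y) (hab : a ≤ b) (hY : a = b → Y.Nonempty)
    (hV : a + b ≤ #V) (hB : IsTransversal B Y) (hBq : #B ≤ q) (haq : a ≤ q) :
    #X + #Y + (#V - q).choose b ≤ (#V).choose b + 1 := by
  rcases X.eq_empty_or_nonempty with rfl | hX
  · have := hB.card_add_choose_le h.right_subset hBq
    rw [card_empty]
    omega
  · have := Nat.choose_le_choose b (show #V - q ≤ #V - a by omega)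
    have := h.hilton_milner hX hab hY hV
    omega

theorem IsCrossIntersecting.card_add_card_add_choose_le_of_isTransversal_of_lt
    (h : IsCrossIntersecting V a b X Y) (hab : a ≤ b) (hb : 0 < b) (hY : a = b → Y.Nonempty)
    (hV : a + b ≤ #V) (hB : IsTransversal B Y) (hBq : #B ≤ q) (haq : a < q) :
    #X + #Y + (#V - q).choose b ≤ (#V).choose b := by
  rcases X.eq_empty_or_nonempty with rfl | hX
  · have := hB.card_add_choose_le h.right_subset hBq
    rw [card_empty]
    omega
  · have := choose_lt_choose hb (show b ≤ #V - a by omega) (show #V - q < #V - a by omega)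
    have := h.hilton_milner hX hab hY hV
    omega

/- Induct on `#A`: for `x ∈ A`, the link of `Y` at `x` has a transversal avoiding `x`, while the
members of `Y` missing `x` still meet `A.erase x`. -/
theorem IsCrossIntersecting.card_add_card_add_choose_le_of_hasTransversalsAvoiding
    (h : IsCrossIntersecting V a (b + 1) X Y) (hAV : A ⊆ V) (hV : #A + b + 1 ≤ #V)
    (haA : a ≤ #A) (hab : a < b) (haq : a < q) (hqb : q ≤ b + 1) (hAX : ∀ S ∈ X, ¬A ⊆ S)
    (hA : IsTransversal A Y) (hY : HasTransversalsAvoiding A q Y) :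
    #X + #Y + ((#V - #A).choose (b + 1) + (#V - q).choose (b + 1)) ≤
      (#V).choose (b + 1) + (#V - q - #A).choose (b + 1) := by
  induction hm : #A generalizing A V X Y a with
  | zero =>
    obtain rfl := card_eq_zero.1 hm
    have hX : X = ∅ := eq_empty_of_forall_notMem fun S hS => hAX S hS (empty_subset S)
    have hY : Y = ∅ := eq_empty_of_forall_notMem fun S hS => by simpa using hA S hS
    simp only [hX, hY, card_empty, Nat.sub_zero, zero_add, le_refl]
  | succ m ih =>
    obtain ⟨x, hx⟩ : A.Nonempty := card_pos.1 (by omega)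
    have hAx := card_erase_of_mem hx
    obtain ⟨N, hN⟩ : ∃ N, #V = N + 1 := ⟨#V - 1, by omega⟩
    have hVx : #(V.erase x) = N := by rw [card_erase_of_mem (hAV hx), hN, Nat.add_sub_cancel]
    obtain ⟨B, hB, hBq, hxB⟩ := hY x hx
    have h₁ := (h.nonMember_member x).card_add_card_add_choose_le_of_isTransversal_of_lt
      (by omega) (by omega) (by omega) (by omega) (hB.memberSubfamily hxB) hBq haq
    have h₂ := ih (h.member_nonMember x) (erase_subset_erase x hAV) (by omega) (by omega)
      (by omega) (by omega)
      (fun S hS hAS => hAX _ (mem_memberSubfamily.1 hS).1 (subset_insert_iff.2 hAS))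
      (hA.erase_nonMemberSubfamily x)
      (hY.mono (erase_subset x A) (filter_subset _ _)) (by omega)
    rw [hVx] at h₁ h₂
    have hpascal := Nat.choose_succ_succ' (N - q) b
    rw [← card_memberSubfamily_add_card_nonMemberSubfamily x X,
      ← card_memberSubfamily_add_card_nonMemberSubfamily x Y, hN, Nat.choose_succ_succ',
      Nat.add_sub_add_right, show N + 1 - q = N - q + 1 by omega, Nat.add_sub_add_right]
    rw [Nat.add_sub_cancel] at h₁
    omega

theorem IsCrossIntersecting.card_add_card_add_two_mul_choose_le
    (h : IsCrossIntersecting V (r + 1) (r + 2) X Y) (hX : X.Nonempty) (hY : Y.Nonempty)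
    (hV : 2 * r + 3 ≤ #V) (hYV : HasTransversalsAvoiding V (r + 1) Y) :
    #X + #Y + 2 * (#V - (r + 1)).choose (r + 2) ≤
      (#V).choose (r + 2) + (#V - 2 * (r + 1)).choose (r + 2) + 2 := by
  obtain ⟨A, hA⟩ := hX
  obtain ⟨C, hC⟩ := hY
  obtain ⟨x, hx⟩ := h.inter_nonempty A hA C hC
  obtain ⟨hxA, hxC⟩ := mem_inter.1 hx
  obtain ⟨hAV, hAr⟩ := mem_powersetCard.1 (h.left_subset hA)
  obtain ⟨N, hN⟩ : ∃ N, #V = N + 1 := ⟨#V - 1, by omega⟩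
  have hVx : #(V.erase x) = N := by rw [card_erase_of_mem (hAV hxA), hN, Nat.add_sub_cancel]
  have hAx : #(A.erase x) = r := by rw [card_erase_of_mem hxA, hAr, Nat.add_sub_cancel]
  have hAX := erase_mem_memberSubfamily hA hxA
  have hXpos : 0 < #(X.memberSubfamily x) := card_pos.2 ⟨_, hAX⟩
  obtain ⟨B, hB, hBr, hxB⟩ := hYV x (hAV hxA)
  have h₁ := (h.nonMember_member x).card_add_card_add_choose_le_of_isTransversal
    le_rfl (fun _ => ⟨_, erase_mem_memberSubfamily hC hxC⟩) (by omega) (hB.memberSubfamily hxB)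
    hBr le_rfl
  have hlinks := h.member_nonMember x
  have h₂ := (hlinks.mono (erase_subset (A.erase x) _)
    Subset.rfl).card_add_card_add_choose_le_of_hasTransversalsAvoiding (b := r + 1)
    (erase_subset_erase x hAV) (by omega) (by omega) (by omega) (by omega) (by omega)
    (fun S hS hAS => ne_of_mem_erase hS (eq_of_subset_of_card_le hAS (by
      rw [(mem_powersetCard.1 (hlinks.left_subset (mem_of_mem_erase hS))).2, hAx]
      omega)).symm)
    (hlinks.isTransversal hAX)
    (hYV.mono ((erase_subset x A).trans hAV) (filter_subset _ _))
  rw [card_erase_of_mem hAX, hVx, hAx, show N - r = N - (r + 1) + 1 by omega,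
    Nat.choose_succ_succ'] at h₂
  rw [hVx] at h₁
  rw [← card_memberSubfamily_add_card_nonMemberSubfamily x X,
    ← card_memberSubfamily_add_card_nonMemberSubfamily x Y, hN, Nat.choose_succ_succ',
    show N + 1 - (r + 1) = N - (r + 1) + 1 by omega, Nat.choose_succ_succ',
    show N + 1 - 2 * (r + 1) = N - (r + 1) - r by omega]
  simp only [show r + 1 + 1 = r + 2 from rfl, show r + 2 - 1 = r + 1 from rfl] at h₁ h₂ ⊢
  omega

theorem IsTransversal.nonMember_nonMember_eq_empty {i j : α} (h : IsTransversal {i, j} F) :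
    (F.nonMemberSubfamily i).nonMemberSubfamily j = ∅ :=
  eq_empty_of_forall_notMem fun A hA => by
    obtain ⟨x, hx⟩ := (h.erase_nonMemberSubfamily i).erase_nonMemberSubfamily j A hA
    simp only [mem_inter, mem_erase, mem_insert, mem_singleton] at hx
    tauto

theorem nonMember_member_comm {i j : α} (hij : i ≠ j) (F : Finset (Finset α)) :
    (F.nonMemberSubfamily i).memberSubfamily j = (F.memberSubfamily j).nonMemberSubfamily i := by
  ext A
  simp only [mem_memberSubfamily, mem_nonMemberSubfamily, mem_insert, not_or]
  tauto

theorem nonMember_nonMember_comm (i j : α) (F : Finset (Finset α)) :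
    (F.nonMemberSubfamily i).nonMemberSubfamily j =
      (F.nonMemberSubfamily j).nonMemberSubfamily i :=
  filter_comm _ _ F

theorem IsNontrivialFamily.nonMember_member_nonempty (h : IsNontrivialFamily F) {i j : α}
    (hF : (F.nonMemberSubfamily i).nonMemberSubfamily j = ∅) :
    ((F.nonMemberSubfamily i).memberSubfamily j).Nonempty := by
  obtain ⟨A, hA, hiA⟩ := h i
  have hAi := mem_nonMemberSubfamily.2 ⟨hA, hiA⟩
  have hjA : j ∈ A := by
    by_contra hjA
    exact notMem_empty A (hF ▸ mem_nonMemberSubfamily.2 ⟨hAi, hjA⟩)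
  exact ⟨A.erase j, erase_mem_memberSubfamily hAi hjA⟩

theorem card_eq_card_links (i j : α) (F : Finset (Finset α)) :
    #F = #((F.memberSubfamily i).memberSubfamily j) +
      #((F.memberSubfamily i).nonMemberSubfamily j) +
      #((F.nonMemberSubfamily i).memberSubfamily j) +
      #((F.nonMemberSubfamily i).nonMemberSubfamily j) := by
  have := card_memberSubfamily_add_card_nonMemberSubfamily i F
  have := card_memberSubfamily_add_card_nonMemberSubfamily j (F.memberSubfamily i)
  have := card_memberSubfamily_add_card_nonMemberSubfamily j (F.nonMemberSubfamily i)
  omega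

theorem IsNontrivialFamily.mem_and_ne_of_isTransversal_pair {i j : α}
    (h : IsNontrivialFamily F) (hF : F ⊆ powersetCard a V) (hij : IsTransversal {i, j} F) :
    i ∈ V ∧ i ≠ j := by
  obtain ⟨A, hA, hjA⟩ := h j
  obtain ⟨x, hx⟩ := hij A hA
  rw [mem_inter, mem_insert, mem_singleton] at hx
  have hiA : i ∈ A := by
    rcases hx with ⟨hxA, rfl | rfl⟩
    · exact hxA
    · exact absurd hxA hjA
  exact ⟨(mem_powersetCard.1 (hF hA)).1 hiA, ne_of_mem_of_not_mem hiA hjA⟩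

theorem IsCrossIntersecting.hasTransversalsAvoiding_nonMember_nonMember {i j : α}
    (h : IsCrossIntersecting V a b F G) (hF : IsNontrivialFamily F)
    (hij : IsTransversal {i, j} F) :
    HasTransversalsAvoiding B (a - 1) ((G.nonMemberSubfamily i).nonMemberSubfamily j) := by
  intro x _
  obtain ⟨A, hA, hxA⟩ := hF x
  refine ⟨(A.erase i).erase j, ((h.isTransversal hA).erase_nonMemberSubfamily
    i).erase_nonMemberSubfamily j, ?_, fun hx => hxA (mem_of_mem_erase (mem_of_mem_erase hx))⟩
  have hlt : #((A.erase i).erase j) < #A := by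
    obtain ⟨y, hy⟩ := hij A hA
    rw [mem_inter, mem_insert, mem_singleton] at hy
    refine card_lt_card (((erase_subset j _).trans (erase_subset i A)).ssubset_of_mem_notMem
      hy.1 fun hyA => ?_)
    rw [mem_coe, mem_erase, mem_erase] at hyA
    tauto
  have := (mem_powersetCard.1 (h.left_subset hA)).2
  omega

variable {F₁₂ F₁ F₂ G₁ G₂ G₀ : Finset (Finset α)}

theorem card_links_add_choose_le_of_nonempty (hV : 2 * r + 3 ≤ #V)
    (h₁₂ : IsCrossIntersecting V (r + 1) (r + 1) F₁ G₂)
    (h₂₁ : IsCrossIntersecting V (r + 1) (r + 1) F₂ G₁)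
    (h₁₀ : IsCrossIntersecting V (r + 1) (r + 2) F₁ G₀)
    (h₀ : IsCrossIntersecting V r (r + 2) F₁₂ G₀)
    (hF₁ : F₁.Nonempty) (hF₂ : F₂.Nonempty) (hG₁ : G₁.Nonempty) (hG₂ : G₂.Nonempty)
    (hG₀ : HasTransversalsAvoiding V (r + 1) G₀) :
    #F₁₂ + #F₁ + #F₂ + #G₁ + #G₂ + #G₀ +
      2 * ((#V - (r + 1)).choose (r + 1) + (#V - (r + 1)).choose (r + 2)) ≤
      2 * (#V).choose (r + 1) + (#V).choose (r + 2) + (#V - 2 * (r + 1)).choose (r + 2) + 2 := by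
  obtain ⟨A, hA⟩ := hF₁
  obtain ⟨hAV, hAr⟩ := mem_powersetCard.1 (h₁₀.left_subset hA)
  have hle₁ := h₁₂.hilton_milner ⟨A, hA⟩ le_rfl (fun _ => hG₂) (by omega)
  have hle₂ := h₂₁.hilton_milner hF₂ le_rfl (fun _ => hG₁) (by omega)
  have hle₀ := h₀.card_add_card_add_choose_le_of_hasTransversalsAvoiding (b := r + 1)
    hAV (by omega) (by omega) (by omega) (lt_add_one r) (by omega)
    (fun S hS hAS => by
      have := card_le_card hAS
      have := (mem_powersetCard.1 (h₀.left_subset hS)).2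
      omega)
    (h₁₀.isTransversal hA) (hG₀.mono hAV Subset.rfl)
  rw [hAr, show #V - (r + 1) - (r + 1) = #V - 2 * (r + 1) by omega] at hle₀
  simp only [show r + 1 + 1 = r + 2 from rfl] at hle₀
  omega

theorem card_links_add_choose_le_of_empty (hV : 2 * r + 3 ≤ #V)
    (h₂₁ : IsCrossIntersecting V (r + 1) (r + 1) F₂ G₁)
    (h₁₀ : IsCrossIntersecting V (r + 1) (r + 2) F₁ G₀)
    (h₂₀ : IsCrossIntersecting V (r + 1) (r + 2) F₂ G₀)
    (h₀ : IsCrossIntersecting V r (r + 2) F₁₂ G₀)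
    (hF₁ : F₁.Nonempty) (hF₂ : F₂.Nonempty) (hG : G₀.Nonempty)
    (hG₀ : HasTransversalsAvoiding V (r + 1) G₀) :
    #F₁₂ + #F₁ + #F₂ + #G₁ + #G₀ +
      2 * ((#V - (r + 1)).choose (r + 1) + (#V - (r + 1)).choose (r + 2)) ≤
      2 * (#V).choose (r + 1) + (#V).choose (r + 2) + (#V - 2 * (r + 1)).choose (r + 2) + 2 := by
  obtain ⟨C, hC⟩ := hG
  have hCr := (mem_powersetCard.1 (h₀.right_subset hC)).2.le
  have hle₁ := h₁₀.card_add_card_add_two_mul_choose_le hF₁ ⟨C, hC⟩ hV hG₀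
  have hle₂ := h₂₁.symm.card_add_card_add_choose_le_of_isTransversal_of_lt le_rfl
    (Nat.succ_pos r) (fun _ => hF₂) (by omega) (h₂₀.symm.isTransversal hC) hCr (by omega)
  have hle₀ := (h₀.symm.isTransversal hC).card_add_choose_le h₀.left_subset hCr
  have hnum := choose_add_choose_sub_le (N := #V) (r := r) (by omega)
  have hpascal := Nat.choose_succ_succ' (#V - (r + 2)) r
  rw [show #V - (r + 2) + 1 = #V - (r + 1) by omega] at hpascal
  rw [Nat.sub_sub] at hnum
  omega

theorem card_links_add_choose_le (hV : 2 * r + 3 ≤ #V)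
    (h₁₂ : IsCrossIntersecting V (r + 1) (r + 1) F₁ G₂)
    (h₂₁ : IsCrossIntersecting V (r + 1) (r + 1) F₂ G₁)
    (h₁₀ : IsCrossIntersecting V (r + 1) (r + 2) F₁ G₀)
    (h₂₀ : IsCrossIntersecting V (r + 1) (r + 2) F₂ G₀)
    (h₀ : IsCrossIntersecting V r (r + 2) F₁₂ G₀)
    (hF₁ : F₁.Nonempty) (hF₂ : F₂.Nonempty)
    (hG₁ : G₀ = ∅ → G₁.Nonempty) (hG₂ : G₀ = ∅ → G₂.Nonempty)
    (hG₀ : HasTransversalsAvoiding V (r + 1) G₀) :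
    #F₁₂ + #F₁ + #F₂ + #G₁ + #G₂ + #G₀ +
      2 * ((#V - (r + 1)).choose (r + 1) + (#V - (r + 1)).choose (r + 2)) ≤
      2 * (#V).choose (r + 1) + (#V).choose (r + 2) + (#V - 2 * (r + 1)).choose (r + 2) + 2 := by
  rcases G₁.eq_empty_or_nonempty with hG₁e | hG₁n
  · have hG : G₀.Nonempty := nonempty_iff_ne_empty.2 fun h => (hG₁ h).ne_empty hG₁e
    have := card_links_add_choose_le_of_empty hV h₁₂ h₂₀ h₁₀ h₀ hF₂ hF₁ hG hG₀
    rw [hG₁e, card_empty]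
    omega
  rcases G₂.eq_empty_or_nonempty with hG₂e | hG₂n
  · have hG : G₀.Nonempty := nonempty_iff_ne_empty.2 fun h => (hG₂ h).ne_empty hG₂e
    have := card_links_add_choose_le_of_empty hV h₂₁ h₁₀ h₂₀ h₀ hF₁ hF₂ hG hG₀
    rw [hG₂e, card_empty]
    omega
  · exact card_links_add_choose_le_of_nonempty hV h₁₂ h₂₁ h₁₀ h₀ hF₁ hF₂ hG₁n hG₂n hG₀

theorem IsCrossIntersecting.card_add_card_le_of_isTransversal_pair {i j : α}
    (h : IsCrossIntersecting V k k F G) (hF : IsNontrivialFamily F) (hG : IsNontrivialFamily G)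
    (hFij : IsTransversal {i, j} F) (hk : 2 ≤ k) (hV : 2 * k < #V) :
    #F + #G + 2 * (#V - k).choose k ≤ (#V).choose k + (#V - 2 * k).choose k + 2 := by
  obtain ⟨r, rfl⟩ : ∃ r, k = r + 2 := ⟨k - 2, by omega⟩
  have hFji : IsTransversal {j, i} F := pair_comm i j ▸ hFij
  obtain ⟨hi, hij⟩ := hF.mem_and_ne_of_isTransversal_pair h.left_subset hFij
  have hj := (hF.mem_and_ne_of_isTransversal_pair h.left_subset hFji).1
  obtain ⟨N, hN⟩ : ∃ N, #V = N + 2 := ⟨#V - 2, by omega⟩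
  have hW : #((V.erase i).erase j) = N := by
    rw [card_erase_of_mem (mem_erase.2 ⟨hij.symm, hj⟩), card_erase_of_mem hi]
    omega
  have hF₀ := hFij.nonMember_nonMember_eq_empty
  have hF₁ := hF.nonMember_member_nonempty hFji.nonMember_nonMember_eq_empty
  have hG₁ := hG.nonMember_member_nonempty (i := j) (j := i)
  rw [nonMember_member_comm hij.symm] at hF₁ hG₁
  rw [nonMember_nonMember_comm] at hG₁
  have hlinks := card_links_add_choose_le (by omega)
    ((h.member_nonMember i).nonMember_member j) ((h.nonMember_member i).member_nonMember j)
    ((h.member_nonMember i).nonMember_nonMember j)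
    ((h.nonMember_nonMember i).member_nonMember j)
    ((h.member_nonMember i).member_nonMember j)
    hF₁ (hF.nonMember_member_nonempty hF₀) hG₁ hG.nonMember_member_nonempty
    (h.hasTransversalsAvoiding_nonMember_nonMember hF hFij)
  have hG₁₂ := card_le_card (memberSubfamily_subset_powersetCard
    (memberSubfamily_subset_powersetCard h.right_subset i) j)
  rw [card_powersetCard] at hG₁₂
  rw [hW] at hlinks hG₁₂
  rw [card_eq_card_links i j F, card_eq_card_links i j G, hF₀, card_empty, hN,
    show N + 2 - (r + 2) = N - (r + 1) + 1 by omega,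
    show N + 2 - 2 * (r + 2) = N - 2 * (r + 1) by omega, Nat.choose_succ_succ' (N - (r + 1)),
    Nat.choose_succ_succ' (N + 1), Nat.choose_succ_succ' N, Nat.choose_succ_succ' N]
  simp only [show r + 1 + 1 = r + 2 from rfl, show r + 2 - 1 - 1 = r from rfl] at hG₁₂ ⊢
  omega

end PairTransversal

theorem stmt2_general [DecidableEq α] {V : Finset α} {F G : Finset (Finset α)} {k : ℕ}
    (h : IsCrossIntersecting V k k F G) (hF : IsNontrivialFamily F) (hG : IsNontrivialFamily G)
    (hk : 2 ≤ k) (hV : 2 * k < #V) :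
    #F + #G + 2 * (#V - k).choose k ≤ (#V).choose k + (#V - 2 * k).choose k + 2 := by
  classical
  let _ : LinearOrder α := linearOrderOfSTO WellOrderingRel
  by_contra hlt
  obtain ⟨F', G', ⟨h', hF', hG', hcard⟩, hFs, hGs⟩ := exists_isShifted (V := V)
    (Q := fun X Y => IsCrossIntersecting V k k X Y ∧ IsNontrivialFamily X ∧
      IsNontrivialFamily Y ∧ #X + #Y = #F + #G)
    (fun i hi j _ X Y ⟨hXY, hX, hY, hcard⟩ => ⟨hXY.compression hi j,
      hX.compression fun hX₀ => hlt <| hcard ▸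
        hXY.card_add_card_le_of_isTransversal_pair hX hY hX₀ hk hV,
      hY.compression fun hY₀ => hlt <| hcard ▸ add_comm #Y #X ▸
        hXY.symm.card_add_card_le_of_isTransversal_pair hY hX hY₀ hk hV,
      by rw [card_compression, card_compression, hcard]⟩)
    ⟨h, hF, hG, rfl⟩
  exact hlt (hcard ▸
    h'.card_add_card_le_of_isShifted_of_isNontrivialFamily hFs hGs hF' hG' hk hV)

/-- Maximum of |F| + |G| for non-trivial cross-intersecting k-uniform families. -/
theorem stmt2 (n k : ℕ) (hk : 2 ≤ k) (hn : 2 * k < n)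
    (F G : Finset (Finset ℕ))
    (hF : F ⊆ (Finset.Icc 1 n).powersetCard k)
    (hG : G ⊆ (Finset.Icc 1 n).powersetCard k)
    (hcross : ∀ A ∈ F, ∀ B ∈ G, (A ∩ B).Nonempty)
    (hntF : ∀ x : ℕ, ∃ A ∈ F, x ∉ A)
    (hntG : ∀ x : ℕ, ∃ B ∈ G, x ∉ B) :
    (F.card + G.card : ℤ) ≤
      (n.choose k : ℤ) - 2 * (n - k).choose k + (n - 2 * k).choose k + 2 := by
  have h := stmt2_general (V := Icc 1 n) ⟨hF, hG, hcross⟩ hntF hntG hk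
    (by rwa [Nat.card_Icc, Nat.add_sub_cancel])
  rw [Nat.card_Icc, Nat.add_sub_cancel] at h
  omega
end

section
/- Let k ≥ ℓ ≥ 2 and n > k + ℓ. Suppose F ⊆ C([n],k) and G ⊆ C([n],ℓ) are non-trivial and cross-intersecting. Then |F| + |G| ≤ C(n,k) − 2·C(n−ℓ,k) + C(n−2ℓ,k) + 2. -/
/-!
Let `x` be a point whose core `K`, the intersection of the members of `G` containing `x`, is
minimal, so that every member of `G` contains `K` or is disjoint from it. The members of `F` are
split according to whether they contain `x`, avoid `x` but meet `K`, or avoid `K`.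

The first part, together with the members of `G` avoiding `x`, is a nonempty cross-intersecting pair
in the link of `x`, to which the Hilton–Milner type bound applies; the latter follows from
Kruskal–Katona compression, by induction on the ground set. The second part consists of sets meeting
both `K \ {x}` and a fixed member of `G` that avoids `x`. The third part, together with the traces
outside `K` of the members of `G` containing `x`, is a cross-intersecting pair of uniformities `k`
and `l - |K|` on the complement of `K`, handled by induction.

For `l = k` the Hilton–Milner type bound in the link of `x` is available only if `x` has degree
above `C(n - 2, k - 2)` in `F`, or symmetrically in `G`. If all degrees are below this threshold,
then both families are small by double counting.
-/

section

open Finset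

/-! ### Binomial coefficients -/

section Choose

theorem choose_le_choose_of_add_le {n a b : ℕ} (hab : a ≤ b) (hn : a + b ≤ n) :
    n.choose a ≤ n.choose b := by
  have below_half : ∀ c, a ≤ c → 2 * c ≤ n → n.choose a ≤ n.choose c := by
    intro c hac
    induction c, hac using Nat.le_induction with
    | base => exact fun _ ↦ le_rfl
    | succ c _ ih =>
      exact fun hc ↦ (ih (by lia)).trans (Nat.choose_le_succ_of_lt_half_left (by lia))
  rcases le_total (2 * b) n with h | h
  · exact below_half b hab h
  · rw [← Nat.choose_symm (show b ≤ n by lia)]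
    exact below_half (n - b) (by lia) (by lia)

theorem choose_add_choose_sub_le_s15 {r n c : ℕ} (hrc : r < c) (hn : c + r ≤ n) :
    n.choose r + (n - r).choose c ≤ n.choose c + 1 := by
  induction r generalizing n c with
  | zero => simp [add_comm]
  | succ r ih =>
    obtain ⟨n, rfl⟩ : ∃ m, n = m + 1 := ⟨n - 1, by lia⟩
    obtain ⟨c, rfl⟩ : ∃ d, c = d + 1 := ⟨c - 1, by lia⟩
    have hc := ih (n := n) (c := c + 1) (by lia) (by lia)
    have hr : n.choose (r + 1) ≤ n.choose c := choose_le_choose_of_add_le (by lia) (by lia)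
    rw [Nat.choose_succ_succ' n r, Nat.choose_succ_succ' n c, Nat.add_sub_add_right]
    lia

theorem choose_add_choose_sub_le_of_lt {r n c t : ℕ} (hrc : r < c) (hn : c + r ≤ n)
    (hrt : r < t) : n.choose r + (n - t).choose c ≤ n.choose c := by
  have hr := choose_add_choose_sub_le_s15 hrc hn
  obtain ⟨c, rfl⟩ : ∃ d, c = d + 1 := ⟨c - 1, by lia⟩
  obtain ⟨m, hm⟩ : ∃ m, n - r = m + 1 := ⟨n - r - 1, by lia⟩
  have hmono : (n - t).choose (c + 1) ≤ m.choose (c + 1) := Nat.choose_le_choose _ (by lia)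
  have hpos : 0 < m.choose c := Nat.choose_pos (by lia)
  rw [hm, Nat.choose_succ_succ' m c] at hr
  lia

theorem choose_add_add_choose_le {a b : ℕ} (hab : a ≤ b) (d k : ℕ) :
    (a + d).choose k + b.choose k ≤ a.choose k + (b + d).choose k := by
  induction d with
  | zero => simp
  | succ d ih =>
    cases k with
    | zero => simp
    | succ k =>
      have hmono : (a + d).choose k ≤ (b + d).choose k := Nat.choose_le_choose k (by lia)
      rw [← add_assoc, ← add_assoc, Nat.choose_succ_succ', Nat.choose_succ_succ']
      lia

theorem choose_add_sum_range_choose (a r p : ℕ) :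
    a.choose (r + 1) + ∑ i ∈ range p, (a + i).choose r = (a + p).choose (r + 1) := by
  induction p with
  | zero => simp
  | succ p ih =>
    rw [sum_range_succ, ← add_assoc, ih, ← add_assoc, Nat.choose_succ_succ', add_comm]

theorem choose_add_choose_add_sum_choose (a r p q : ℕ) :
    (a + p).choose (r + 2) + (a + q).choose (r + 2) +
        ∑ i ∈ range p, ∑ j ∈ range q, (a + i + j).choose r =
      (a + p + q).choose (r + 2) + a.choose (r + 2) := by
  have inner : ∑ i ∈ range p, (a + i).choose (r + 1) +
      ∑ i ∈ range p, ∑ j ∈ range q, (a + i + j).choose r =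
        ∑ i ∈ range p, (a + q + i).choose (r + 1) := by
    rw [← sum_add_distrib]
    exact sum_congr rfl fun i _ ↦ by rw [choose_add_sum_range_choose, add_right_comm]
  have outer := choose_add_sum_range_choose a (r + 1) p
  have outer_shifted := choose_add_sum_range_choose (a + q) (r + 1) p
  rw [add_right_comm] at outer_shifted
  lia

theorem choose_add_choose_lt {a p q k : ℕ} (hp : 0 < p) (hq : 0 < q) (hk : 2 ≤ k)
    (hkn : k ≤ a + p + q) :
    (a + p).choose k + (a + q).choose k < (a + p + q).choose k + a.choose k := by
  obtain ⟨r, rfl⟩ : ∃ r, k = r + 2 := ⟨k - 2, by lia⟩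
  rw [← choose_add_choose_add_sum_choose, Nat.lt_add_right_iff_pos]
  calc 0 < (a + (p - 1) + (q - 1)).choose r := Nat.choose_pos (by lia)
    _ ≤ ∑ j ∈ range q, (a + (p - 1) + j).choose r :=
        single_le_sum (f := fun j ↦ (a + (p - 1) + j).choose r) (fun _ _ ↦ Nat.zero_le _)
          (mem_range.2 (by lia))
    _ ≤ ∑ i ∈ range p, ∑ j ∈ range q, (a + i + j).choose r :=
        single_le_sum (f := fun i ↦ ∑ j ∈ range q, (a + i + j).choose r)
          (fun _ _ ↦ Nat.zero_le _) (mem_range.2 (by lia))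

theorem choose_add_choose_add_choose_le {a l q k : ℕ} (hql : q + 2 ≤ l) (hlk : l ≤ k)
    (hk : k < a + l) :
    (a + l + q).choose q + (a + q).choose k + (a + l).choose k ≤
      (a + l + q).choose k + a.choose k + 1 := by
  obtain ⟨k, rfl⟩ : ∃ d, k = d + 1 := ⟨k - 1, by lia⟩
  induction q with
  | zero => simp only [add_zero, Nat.choose_zero_right]; lia
  | succ q ih =>
    have hq := ih (by lia)
    have hstep := choose_add_choose_sub_le_of_lt (n := a + l + q) (r := q + 1) (c := k) (t := l)
      (by lia) (by lia) (by lia)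
    rw [show a + l + q - l = a + q by lia] at hstep
    rw [← add_assoc, ← add_assoc, Nat.choose_succ_succ' (a + l + q) q,
      Nat.choose_succ_succ' (a + l + q) k, Nat.choose_succ_succ' (a + q) k]
    lia

theorem choose_add_choose_succ_add_choose_le {a m q k : ℕ} (hqm : q < m) (hmk : m < k)
    (hk : k ≤ a + m) :
    (a + m).choose k + (a + q + 1).choose k + (a + m + q + 1).choose q ≤
      (a + m + q + 1).choose k + a.choose k := by
  induction q with
  | zero =>
    have := choose_add_choose_lt (a := a) (k := k) hqm one_pos (by lia) (by lia)
    simp only [add_zero, Nat.choose_zero_right]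
    lia
  | succ q ih =>
    obtain ⟨k, rfl⟩ : ∃ d, k = d + 1 := ⟨k - 1, by lia⟩
    have hq := ih (by lia)
    have hstep := choose_add_choose_sub_le_of_lt (n := a + m + q + 1) (r := q + 1) (c := k)
      (t := m) (by lia) (by lia) (by lia)
    rw [show a + m + q + 1 - m = a + q + 1 by lia] at hstep
    rw [← add_assoc, ← add_assoc, Nat.choose_succ_succ' (a + m + q + 1) q,
      Nat.choose_succ_succ' (a + m + q + 1) k, Nat.choose_succ_succ' (a + q + 1) k]
    lia

theorem sq_mul_choose_le_sum_choose (a r k : ℕ) :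
    k ^ 2 * (a + (k - 1)).choose r ≤
      ∑ i ∈ range k, ∑ j ∈ range k, (a + i + j).choose r := by
  have reflect : ∑ i ∈ range k, ∑ j ∈ range k, (a + i + j).choose r =
      ∑ i ∈ range k, ∑ j ∈ range k, (a + (k - 1 - i) + (k - 1 - j)).choose r := by
    rw [← sum_range_reflect]
    exact sum_congr rfl fun i _ ↦ (sum_range_reflect _ _).symm
  -- By convexity each pair of reflected terms averages to at least the middle one.
  have pairs : ∀ i ∈ range k, ∀ j ∈ range k, 2 * (a + (k - 1)).choose r ≤
      (a + i + j).choose r + (a + (k - 1 - i) + (k - 1 - j)).choose r := by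
    intro i hi j hj
    rw [mem_range] at hi hj
    wlog hij : i + j ≤ k - 1 generalizing i j
    · have := this (k - 1 - i) (by lia) (k - 1 - j) (by lia) (by lia)
      rwa [Nat.sub_sub_self (by lia), Nat.sub_sub_self (by lia), add_comm (Nat.choose _ _)] at this
    have := choose_add_add_choose_le (show a + i + j ≤ a + (k - 1) by lia) (k - 1 - (i + j)) r
    rw [show a + i + j + (k - 1 - (i + j)) = a + (k - 1) by lia,
      show a + (k - 1) + (k - 1 - (i + j)) = a + (k - 1 - i) + (k - 1 - j) by lia] at this
    lia
  have total := sum_le_sum fun i hi ↦ sum_le_sum (pairs i hi)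
  simp only [sum_add_distrib, ← reflect, sum_const, card_range, smul_eq_mul] at total
  linarith

theorem choose_add_le_choose_add_mul (a r p : ℕ) :
    (a + p).choose (r + 1) ≤ a.choose (r + 1) + p * (a + p - 1).choose r := by
  rw [← choose_add_sum_range_choose]
  gcongr
  refine (sum_le_card_nsmul _ _ ((a + p - 1).choose r) fun i hi ↦ ?_).trans_eq (by simp)
  exact Nat.choose_le_choose _ (by have := mem_range.1 hi; lia)

theorem two_mul_choose_le_mul_choose {a r : ℕ} (ha : (r + 1) ^ 2 ≤ a) :
    2 * (a + r + 1).choose r ≤ (r + 2) * a.choose r := by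
  cases r with
  | zero => simp
  | succ r =>
    have hle := choose_add_le_choose_add_mul a r (r + 2)
    have habs := Nat.add_one_mul_choose_eq (a + r + 1) r
    have hmul : (r + 3) * (r + 2) * (a + r + 1).choose r ≤
        (a + r + 2) * (a + r + 1).choose r := Nat.mul_le_mul_right _ (by nlinarith)
    rw [show a + (r + 2) = a + r + 1 + 1 by ring, Nat.add_sub_cancel] at hle
    rw [← add_assoc a r 1]
    nlinarith

theorem three_terms_le_choose_add (s m r : ℕ) :
    s.choose (r + 2) + s.choose (r + 1) * m + s.choose r * m.choose 2 ≤
      (s + m).choose (r + 2) := by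
  rw [Nat.add_choose_eq, Nat.sum_antidiagonal_succ', Nat.sum_antidiagonal_succ', ← add_assoc]
  simp only [Nat.choose_zero_right, mul_one, zero_add, Nat.choose_one_right]
  gcongr
  exact single_le_sum (f := fun p : ℕ × ℕ ↦ s.choose p.1 * m.choose (p.2 + 1 + 1))
    (fun _ _ ↦ Nat.zero_le _) (show (r, 0) ∈ antidiagonal r by simp)

theorem two_mul_mul_choose_le_mul_choose {u r : ℕ} (hu : u ≤ r * (r + 1)) :
    2 * (u + 2 * r + 2) * (u + r + 1).choose (r + 2) ≤
      u * (u + 2 * r + 3).choose (r + 2) := by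
  have hterms := three_terms_le_choose_add (u + r + 1) (r + 2) r
  have htwo : (r + 2).choose 2 * 2 = (r + 2) * (r + 1) := by
    rw [Nat.choose_two_right, Nat.div_mul_cancel (Nat.even_mul_pred_self _).two_dvd]; rfl
  have habs₁ := Nat.choose_succ_right_eq (u + r + 1) (r + 1)
  have habs₀ := Nat.choose_succ_right_eq (u + r + 1) r
  rw [show u + r + 1 - (r + 1) = u by lia] at habs₁
  rw [show u + r + 1 - r = u + 1 by lia] at habs₀
  rw [show u + r + 1 + (r + 2) = u + 2 * r + 3 by ring] at hterms
  set x := (u + r + 1).choose (r + 2)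
  set y := (u + r + 1).choose (r + 1)
  set z := (u + r + 1).choose r
  have hcoeff : 2 * (u + 1) * (2 * (u + 2 * r + 2)) ≤
      2 * (u + 1) * (u + (r + 2) ^ 2) + ((r + 2) * (r + 1)) ^ 2 := by
    nlinarith [Nat.mul_le_mul_right (u + 1) hu]
  refine Nat.le_of_mul_le_mul_left ?_ (show 0 < 2 * (u + 1) by lia)
  calc 2 * (u + 1) * (2 * (u + 2 * r + 2) * x)
      = 2 * (u + 1) * (2 * (u + 2 * r + 2)) * x := by ring
    _ ≤ (2 * (u + 1) * (u + (r + 2) ^ 2) + ((r + 2) * (r + 1)) ^ 2) * x :=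
        Nat.mul_le_mul_right _ hcoeff
    _ = 2 * (u + 1) * (u * (x + y * (r + 2) + z * (r + 2).choose 2)) := by
        linear_combination (2 * (u + 1) * (r + 2) + (r + 2) * (r + 1) ^ 2) * habs₁ +
          u * (r + 2) * (r + 1) * habs₀ - u * (u + 1) * z * htwo
    _ ≤ 2 * (u + 1) * (u * (u + 2 * r + 3).choose (r + 2)) := by gcongr

theorem two_mul_mul_choose_add_le_of_lt {n k : ℕ} (hk : 2 ≤ k) (hkn : 2 * k ≤ n)
    (hn : n < k * (k - 1) + 2) :
    2 * (n * (n - 2).choose (k - 2)) + k * (2 * (n - k).choose k) ≤ k * n.choose k := by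
  obtain ⟨r, rfl⟩ : ∃ r, k = r + 2 := ⟨k - 2, by lia⟩
  obtain ⟨u, rfl⟩ : ∃ u, n = u + 2 * r + 3 := ⟨n - (2 * r + 3), by lia⟩
  have hmain := two_mul_mul_choose_le_mul_choose (u := u) (r := r) (by
    rw [show r + 2 - 1 = r + 1 by lia] at hn; nlinarith)
  have habs₁ := Nat.add_one_mul_choose_eq (u + 2 * r + 2) (r + 1)
  have habs₀ := Nat.add_one_mul_choose_eq (u + 2 * r + 1) r
  rw [show u + 2 * r + 3 - 2 = u + 2 * r + 1 by lia,
    show u + 2 * r + 3 - (r + 2) = u + r + 1 by lia, Nat.add_sub_cancel]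
  refine Nat.le_of_mul_le_mul_left ?_ (show 0 < u + 2 * r + 2 by lia)
  calc (u + 2 * r + 2) * (2 * ((u + 2 * r + 3) * (u + 2 * r + 1).choose r) +
        (r + 2) * (2 * (u + r + 1).choose (r + 2)))
      = 2 * ((r + 1) * (r + 2) * (u + 2 * r + 3).choose (r + 2)) +
          (r + 2) * (2 * (u + 2 * r + 2) * (u + r + 1).choose (r + 2)) := by
        linear_combination 2 * (u + 2 * r + 3) * habs₀ + 2 * (r + 1) * habs₁
    _ ≤ 2 * ((r + 1) * (r + 2) * (u + 2 * r + 3).choose (r + 2)) +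
          (r + 2) * (u * (u + 2 * r + 3).choose (r + 2)) := by gcongr
    _ = (u + 2 * r + 2) * ((r + 2) * (u + 2 * r + 3).choose (r + 2)) := by ring

theorem two_mul_mul_choose_add_le_of_le {n k : ℕ} (hk : 2 ≤ k) (hkn : 2 * k ≤ n)
    (hn : k * (k - 1) + 2 ≤ n) :
    2 * (k * (n - 2).choose (k - 2)) + 2 * (n - k).choose k ≤
      n.choose k + (n - 2 * k).choose k := by
  obtain ⟨r, rfl⟩ : ∃ r, k = r + 2 := ⟨k - 2, by lia⟩
  obtain ⟨a, rfl⟩ : ∃ a, n = a + (r + 2) + (r + 2) := ⟨n - 2 * (r + 2), by lia⟩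
  have hdeg := two_mul_choose_le_mul_choose (a := a + r + 1) (r := r) (by
    rw [show r + 2 - 1 = r + 1 by lia] at hn; nlinarith)
  have hsum := sq_mul_choose_le_sum_choose a r (r + 2)
  have hrect := choose_add_choose_add_sum_choose a r (r + 2) (r + 2)
  rw [show r + 2 - 1 = r + 1 by lia, ← add_assoc] at hsum
  rw [show a + (r + 2) + (r + 2) - 2 = a + r + 1 + r + 1 by lia, Nat.add_sub_cancel,
    Nat.add_sub_cancel, show a + (r + 2) + (r + 2) - 2 * (r + 2) = a by lia]
  nlinarith

end Choose

/-! ### Transversals and links -/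

/-- Two cross-intersecting families `F` and `G` of `k`-subsets and of `l`-subsets of `V`; the
crossing condition is stated by `Disjoint`, which is how the library's set lemmas consume it. -/
structure CrossPair {α : Type*} [DecidableEq α] (V : Finset α) (k l : ℕ)
    (F G : Finset (Finset α)) : Prop where
  left_subset : F ⊆ V.powersetCard k
  right_subset : G ⊆ V.powersetCard l
  not_disjoint : ∀ A ∈ F, ∀ B ∈ G, ¬Disjoint A B

namespace CrossPair

/-- A family is non-trivial when its members have no common point. -/
def IsNontrivial {α : Type*} (F : Finset (Finset α)) : Prop :=
  ∀ x, ∃ A ∈ F, x ∉ A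

theorem IsNontrivial.mono {α : Type*} {F F' : Finset (Finset α)} (h : IsNontrivial F)
    (hF : F ⊆ F') : IsNontrivial F' :=
  fun x ↦ (h x).imp fun _ ⟨hA, hx⟩ ↦ ⟨hF hA, hx⟩

theorem IsNontrivial.nonempty {α : Type*} {F : Finset (Finset α)} (h : IsNontrivial F) (x : α) :
    F.Nonempty :=
  (h x).imp fun _ ↦ And.left

section Basic

variable {α : Type*} [DecidableEq α] {V K A B : Finset α} {k l r : ℕ}
  {F F' G G' : Finset (Finset α)} {x : α}

/-- The `l`-subsets of `V` meeting every member of `F`: the largest family `G` that forms a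
`CrossPair` with `F`. -/
def transversals (V : Finset α) (l : ℕ) (F : Finset (Finset α)) : Finset (Finset α) :=
  {B ∈ V.powersetCard l | ∀ A ∈ F, ¬Disjoint A B}

/-- The link of `K` in `F`: the traces outside `K` of the members of `F` containing `K`. -/
def link (K : Finset α) (F : Finset (Finset α)) : Finset (Finset α) :=
  {A ∈ F | K ⊆ A}.image (· \ K)

theorem symm (h : CrossPair V k l F G) : CrossPair V l k G F :=
  ⟨h.right_subset, h.left_subset, fun B hB A hA hd ↦ h.not_disjoint A hA B hB hd.symm⟩

theorem subset_of_mem_left (h : CrossPair V k l F G) (hA : A ∈ F) : A ⊆ V :=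
  (mem_powersetCard.1 (h.left_subset hA)).1

theorem card_of_mem_left (h : CrossPair V k l F G) (hA : A ∈ F) : #A = k :=
  (mem_powersetCard.1 (h.left_subset hA)).2

theorem subset_of_mem_right (h : CrossPair V k l F G) (hB : B ∈ G) : B ⊆ V :=
  h.symm.subset_of_mem_left hB

theorem card_of_mem_right (h : CrossPair V k l F G) (hB : B ∈ G) : #B = l :=
  h.symm.card_of_mem_left hB

theorem mem_transversals :
    B ∈ transversals V l F ↔ B ∈ V.powersetCard l ∧ ∀ A ∈ F, ¬Disjoint A B :=
  mem_filter

theorem right_subset_transversals (h : CrossPair V k l F G) : G ⊆ transversals V l F :=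
  fun _ hB ↦ mem_transversals.2 ⟨h.right_subset hB, fun A hA ↦ h.not_disjoint A hA _ hB⟩

theorem transversals_right (hF : F ⊆ V.powersetCard k) :
    CrossPair V k l F (transversals V l F) :=
  ⟨hF, filter_subset _ _, fun A hA _ hB ↦ (mem_transversals.1 hB).2 A hA⟩

theorem mem_link {C : Finset α} : C ∈ link K F ↔ ∃ A ∈ F, K ⊆ A ∧ A \ K = C := by
  simp [link, and_assoc]

theorem card_link (K : Finset α) (F : Finset (Finset α)) : #(link K F) = #{A ∈ F | K ⊆ A} := by
  refine card_image_of_injOn fun A hA B hB h ↦ ?_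
  have hKA : K ⊆ A := (mem_filter.1 hA).2
  have hKB : K ⊆ B := (mem_filter.1 hB).2
  rw [← sdiff_union_of_subset hKA, ← sdiff_union_of_subset hKB]
  exact congrArg (· ∪ K) h

theorem card_link_singleton (x : α) (F : Finset (Finset α)) : #(link {x} F) = #{A ∈ F | x ∈ A} := by
  simp only [card_link, singleton_subset_iff]

theorem link_subset (hF : F ⊆ V.powersetCard k) :
    link K F ⊆ (V \ K).powersetCard (k - #K) := by
  intro C hC
  obtain ⟨A, hA, hKA, rfl⟩ := mem_link.1 hC
  obtain ⟨hAV, hAk⟩ := mem_powersetCard.1 (hF hA)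
  exact mem_powersetCard.2
    ⟨sdiff_subset_sdiff hAV subset_rfl, by rw [card_sdiff_of_subset hKA, hAk]⟩

theorem filter_disjoint_subset (hF : F ⊆ V.powersetCard k) :
    {A ∈ F | Disjoint K A} ⊆ (V \ K).powersetCard k := by
  intro A hA
  obtain ⟨hA, hKA⟩ := mem_filter.1 hA
  obtain ⟨hAV, hAk⟩ := mem_powersetCard.1 (hF hA)
  exact mem_powersetCard.2 ⟨subset_sdiff.2 ⟨hAV, hKA.symm⟩, hAk⟩

theorem link_left (h : CrossPair V k l F G) (K : Finset α) :
    CrossPair (V \ K) (k - #K) l (link K F) {B ∈ G | Disjoint K B} where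
  left_subset := link_subset h.left_subset
  right_subset := filter_disjoint_subset h.right_subset
  not_disjoint A hA B hB hAB := by
    obtain ⟨A, hAF, hKA, rfl⟩ := mem_link.1 hA
    obtain ⟨hB, hKB⟩ := mem_filter.1 hB
    refine h.not_disjoint A hAF B hB ?_
    rw [← sdiff_union_of_subset hKA]
    exact disjoint_union_left.2 ⟨hAB, hKB⟩

theorem link_right (h : CrossPair V k l F G) (K : Finset α) :
    CrossPair (V \ K) k (l - #K) {A ∈ F | Disjoint K A} (link K G) :=
  (h.symm.link_left K).symm

theorem filter_disjoint_singleton (x : α) (F : Finset (Finset α)) :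
    {A ∈ F | Disjoint {x} A} = {A ∈ F | x ∉ A} := by
  simp only [disjoint_singleton_left]

end Basic

/-! ### Kruskal–Katona compression -/

section Compression

open Colex
open scoped FinsetFamily

theorem exists_isInitSeg_card {ι : Type*} [LinearOrder ι] [Fintype ι] {r m : ℕ}
    (hm : m ≤ (Fintype.card ι).choose r) : ∃ 𝒞 : Finset (Finset ι), IsInitSeg 𝒞 r ∧ #𝒞 = m := by
  induction m with
  | zero => exact ⟨∅, isInitSeg_empty, rfl⟩
  | succ m ih =>
    obtain ⟨𝒞, h𝒞, rfl⟩ := ih (by lia)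
    have hne : ((univ : Finset ι).powersetCard r \ 𝒞).Nonempty := by
      refine sdiff_nonempty.2 fun h ↦ ?_
      have := card_le_card h
      rw [card_powersetCard, card_univ] at this
      lia
    obtain ⟨t, ht, htmin⟩ := exists_min_image _ (fun s ↦ toColex s) hne
    simp only [mem_sdiff, mem_powersetCard, subset_univ, true_and] at ht htmin
    refine ⟨insert t 𝒞, ⟨?_, ?_⟩, card_insert_of_notMem ht.2⟩
    · rw [coe_insert]
      exact Set.forall_mem_insert.2 ⟨ht.1, h𝒞.1⟩
    · rintro s u hs ⟨hus, hu⟩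
      rw [mem_insert] at hs
      rcases hs with rfl | hs
      · by_contra hu'
        exact (htmin u ⟨hu, fun h ↦ hu' (mem_insert_of_mem h)⟩).not_gt hus
      · exact mem_insert_of_mem (h𝒞.2 hs ⟨hus, hu⟩)

theorem card_transversals_add_card_shadow {ι : Type*} [DecidableEq ι] [Fintype ι]
    {F : Finset (Finset ι)} {r l : ℕ} (hF : (F : Set (Finset ι)).Sized r)
    (hrl : r + l ≤ Fintype.card ι) :
    #(transversals univ l F) + #(∂^[Fintype.card ι - r - l] Fᶜˢ) = (Fintype.card ι).choose l := by
  have hFc : (Fᶜˢ : Set (Finset ι)).Sized (Fintype.card ι - r) := hF.compls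
  have hsub : ∂^[Fintype.card ι - r - l] Fᶜˢ ⊆ univ.powersetCard l := fun B hB ↦
    mem_powersetCard.2 ⟨subset_univ _, by have := hFc.shadow_iterate hB; lia⟩
  have hcompl : transversals univ l F = univ.powersetCard l \ ∂^[Fintype.card ι - r - l] Fᶜˢ := by
    ext B
    simp only [mem_transversals, mem_sdiff, mem_shadow_iterate_iff_exists_mem_card_add, not_exists,
      not_and]
    refine and_congr_right fun hB ↦ ⟨fun h S hS hBS _ ↦ ?_, fun h A hA hAB ↦ ?_⟩
    · exact h _ (mem_compls.1 hS) (disjoint_left.2 fun x hx hxB ↦ mem_compl.1 hx (hBS hxB))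
    · refine h Aᶜ (by simpa using hA) (subset_compl_iff_disjoint_left.2 hAB) ?_
      rw [card_compl, hF hA, (mem_powersetCard.1 hB).2]
      lia
  rw [hcompl, card_sdiff_of_subset hsub, Nat.sub_add_cancel (card_le_card hsub), card_powersetCard,
    card_univ]

theorem mem_of_isInitSeg_of_last_notMem {N r : ℕ} {𝒞 : Finset (Finset (Fin (N + 1)))}
    (h𝒞 : IsInitSeg 𝒞 r) (hcard : N.choose r < #𝒞) {T : Finset (Fin (N + 1))} (hT : #T = r)
    (hlast : Fin.last N ∉ T) : T ∈ 𝒞 := by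
  obtain ⟨S, hS, hlastS⟩ : ∃ S ∈ 𝒞, Fin.last N ∈ S := by
    by_contra! h
    have hsub : 𝒞 ⊆ (univ.erase (Fin.last N)).powersetCard r := fun S hS ↦
      mem_powersetCard.2 ⟨subset_erase.2 ⟨subset_univ _, h S hS⟩, h𝒞.1 hS⟩
    have := card_le_card hsub
    rw [card_powersetCard, card_erase_of_mem (mem_univ _), card_fin, Nat.add_sub_cancel] at this
    lia
  refine h𝒞.2 hS ⟨toColex_lt_toColex_iff_exists_forall_lt.2 ⟨Fin.last N, hlastS, hlast, ?_⟩, hT⟩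
  exact fun b hb _ ↦ Fin.lt_last_iff_ne_last.2 fun h ↦ hlast (h ▸ hb)

theorem exists_star_subset_fin {N r l : ℕ} (hrl : r + l ≤ N) {F : Finset (Finset (Fin (N + 1)))}
    (hF : (F : Set (Finset (Fin (N + 1)))).Sized (r + 1)) (hcard : N.choose r < #F) :
    ∃ F' : Finset (Finset (Fin (N + 1))), (F' : Set (Finset (Fin (N + 1)))).Sized (r + 1) ∧
      #F' = #F ∧ (∀ A, #A = r + 1 → Fin.last N ∈ A → A ∈ F') ∧
      #(transversals univ l F) ≤ #(transversals univ l F') := by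
  have hFc : (Fᶜˢ : Set (Finset (Fin (N + 1)))).Sized (N - r) := by simpa using hF.compls
  obtain ⟨𝒞, h𝒞, h𝒞card⟩ := exists_isInitSeg_card (card_compls F ▸ hFc.card_le)
  have hF' : (𝒞ᶜˢ : Set (Finset (Fin (N + 1)))).Sized (r + 1) := by
    have := h𝒞.1.compls
    rwa [Fintype.card_fin, show N + 1 - (N - r) = r + 1 by lia] at this
  refine ⟨𝒞ᶜˢ, hF', (card_compls 𝒞).trans h𝒞card, fun A hA hlast ↦ mem_compls.2 ?_, ?_⟩
  · refine mem_of_isInitSeg_of_last_notMem h𝒞 ?_ ?_ (by simpa using hlast)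
    · rwa [h𝒞card, Nat.choose_symm (by lia)]
    · rw [card_compl, Fintype.card_fin, hA, Nat.add_sub_add_right]
  · have hrl' : r + 1 + l ≤ Fintype.card (Fin (N + 1)) := by rw [Fintype.card_fin]; lia
    have hFsum := card_transversals_add_card_shadow hF hrl'
    have hF'sum := card_transversals_add_card_shadow hF' hrl'
    have hkk := iterated_kk (k := Fintype.card (Fin (N + 1)) - (r + 1) - l) hFc
      (by rw [h𝒞card, card_compls]) h𝒞
    rw [compls_compls] at hF'sum
    lia

variable {α : Type*} [DecidableEq α] {V : Finset α} {F : Finset (Finset α)} {r k l : ℕ}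

theorem transversals_map {β : Type*} [DecidableEq β] (e : α ↪ β) :
    transversals (V.map e) l (F.map (mapEmbedding e).toEmbedding) =
      (transversals V l F).map (mapEmbedding e).toEmbedding := by
  simp only [transversals, powersetCard_map, filter_map, forall_mem_map]
  congr! 3 with B
  simp [mapEmbedding_apply]

theorem exists_star_subset (hV : r + l + 1 ≤ #V) (hF : F ⊆ V.powersetCard (r + 1))
    (hcard : (#V - 1).choose r < #F) :
    ∃ x ∈ V, ∃ F' ⊆ V.powersetCard (r + 1), #F' = #F ∧
      (∀ A ∈ V.powersetCard (r + 1), x ∈ A → A ∈ F') ∧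
      #(transversals V l F) ≤ #(transversals V l F') := by
  obtain ⟨N, hN⟩ : ∃ N, #V = N + 1 := ⟨#V - 1, by lia⟩
  obtain ⟨e, rfl⟩ : ∃ e : Fin (N + 1) ↪ α, V = univ.map e := by
    refine ⟨(V.equivFinOfCardEq hN).symm.toEmbedding.trans (.subtype _), ?_⟩
    rw [← map_map, map_univ_equiv, univ_eq_attach]
    exact V.attach_map_val.symm
  rw [powersetCard_map, subset_map_iff] at hF
  obtain ⟨F, hF, rfl⟩ := hF
  rw [hN, Nat.add_sub_cancel, card_map] at hcard
  obtain ⟨F', hF', hcard', hstar, htrans⟩ := exists_star_subset_fin (N := N) (l := l) (by lia)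
    (fun A hA ↦ (mem_powersetCard.1 (hF hA)).2) hcard
  refine ⟨e (Fin.last N), mem_map_of_mem _ (mem_univ _), F'.map (mapEmbedding e).toEmbedding, ?_,
    by simpa only [card_map], ?_, by simpa only [transversals_map, card_map]⟩
  · rw [powersetCard_map, map_subset_map]
    exact fun A hA ↦ mem_powersetCard.2 ⟨subset_univ _, hF' hA⟩
  · rw [powersetCard_map, forall_mem_map]
    intro A hA hlast
    exact mem_map_of_mem _ (hstar A (mem_powersetCard.1 hA).2 ((mem_map' e).1 hlast))

end Compression

/-! ### Two nonempty cross-intersecting families -/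

section HiltonMilner

variable {α : Type*} [DecidableEq α] {V : Finset α} {F G : Finset (Finset α)} {k l r s : ℕ} {x : α}

/-- The Hilton–Milner type bound `|F| + |G| ≤ C(|V|, k) - C(|V| - l, k) + 1` for nonempty
cross-intersecting families, with the negative term moved to the left. -/
def HiltonMilnerBound (V : Finset α) (k l : ℕ) : Prop :=
  ∀ F G, CrossPair V k l F G → F.Nonempty → G.Nonempty →
    #F + #G + (#V - l).choose k ≤ (#V).choose k + 1

theorem card_filter_notMem_add_choose (hx : x ∈ V) (hF : F ⊆ V.powersetCard (r + 1))
    (hstar : ∀ A ∈ V.powersetCard (r + 1), x ∈ A → A ∈ F) :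
    #{A ∈ F | x ∉ A} + (#V - 1).choose r = #F := by
  have hmem : {A ∈ F | x ∈ A} = {A ∈ V.powersetCard (r + 1) | {x} ⊆ A} := by
    ext A
    simp only [mem_filter, singleton_subset_iff]
    exact and_congr_left fun hxA ↦ ⟨fun hA ↦ hF hA, fun hA ↦ hstar A hA hxA⟩
  have hdeg : #{A ∈ F | x ∈ A} = (#V - 1).choose r := by
    rw [hmem, card_filter_powersetCard_subset {x} V (r + 1) (singleton_subset_iff.2 hx) (by simp),
      card_singleton, Nat.add_sub_cancel]
  rw [← hdeg, add_comm, card_filter_add_card_filter_not]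

theorem mem_of_mem_transversals_of_star (hV : r + l + 1 ≤ #V)
    (hx : x ∈ V) (hstar : ∀ A ∈ V.powersetCard (r + 1), x ∈ A → A ∈ F) {B : Finset α}
    (hB : B ∈ transversals V l F) : x ∈ B := by
  by_contra hxB
  obtain ⟨hB, hFB⟩ := mem_transversals.1 hB
  obtain ⟨hBV, hBl⟩ := mem_powersetCard.1 hB
  obtain ⟨A, hxA, hAV, hA⟩ := exists_subsuperset_card_eq (n := r + 1)
    (singleton_subset_iff.2 (mem_sdiff.2 ⟨hx, hxB⟩) : {x} ⊆ V \ B) (by simp)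
    (by rw [card_sdiff_of_subset hBV]; lia)
  exact hFB A (hstar A (mem_powersetCard.2 ⟨hAV.trans sdiff_subset, hA⟩)
    (singleton_subset_iff.1 hxA)) (subset_sdiff.1 hAV).2

theorem exists_erase_of_choose_lt (hV : r + l + 2 ≤ #V) (hF : F ⊆ V.powersetCard (r + 1))
    (hcard : (#V - 1).choose r < #F) :
    ∃ x ∈ V, ∃ F' ⊆ (V.erase x).powersetCard (r + 1), #F' + (#V - 1).choose r = #F ∧
      #(transversals V (l + 1) F) ≤ #(transversals (V.erase x) l F') := by
  obtain ⟨x, hx, F', hF', hcard', hstar, htrans⟩ := exists_star_subset (l := l + 1) hV hF hcard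
  refine ⟨x, hx, {A ∈ F' | x ∉ A}, ?_, ?_, htrans.trans ?_⟩
  · rw [← sdiff_singleton_eq_erase, ← filter_disjoint_singleton]
    exact filter_disjoint_subset hF'
  · rw [card_filter_notMem_add_choose hx hF' hstar, hcard']
  · have hxB {B} (hB : B ∈ transversals V (l + 1) F') : x ∈ B :=
      mem_of_mem_transversals_of_star (by lia) hx hstar hB
    refine card_le_card_of_injOn (erase · x) (fun B hB ↦ ?_) fun B hB B' hB' h ↦ ?_
    · obtain ⟨hBV, hFB⟩ := mem_transversals.1 hB
      obtain ⟨hBV, hBl⟩ := mem_powersetCard.1 hBV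
      refine mem_transversals.2 ⟨mem_powersetCard.2 ⟨erase_subset_erase _ hBV, ?_⟩, ?_⟩
      · rw [card_erase_of_mem (hxB hB), hBl, Nat.add_sub_cancel]
      · intro A hA hAB
        obtain ⟨hA, hxA⟩ := mem_filter.1 hA
        refine hFB A hA ?_
        rw [← insert_erase (hxB hB)]
        exact disjoint_insert_right.2 ⟨hxA, hAB⟩
    · rw [← insert_erase (hxB hB), ← insert_erase (hxB hB')]
      exact congrArg (insert x) h

theorem card_add_card_add_choose_le_of_choose_lt_left (h : CrossPair V (r + 1) (s + 1) F G)
    (hV : r + s + 2 ≤ #V) (hG : G.Nonempty) (hcard : (#V - 1).choose r < #F)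
    (ih : ∀ x ∈ V, HiltonMilnerBound (V.erase x) (r + 1) s) :
    #F + #G + (#V - (s + 1)).choose (r + 1) ≤ (#V).choose (r + 1) + 1 := by
  obtain ⟨x, hx, F', hF', hcard', htrans⟩ := exists_erase_of_choose_lt hV h.left_subset hcard
  have hGle := (card_le_card h.right_subset_transversals).trans htrans
  have := ih x hx F' _ (transversals_right hF') (card_pos.1 (by lia))
    (card_pos.1 (hG.card_pos.trans_le hGle))
  obtain ⟨n, hn⟩ : ∃ n, #V = n + 1 := ⟨#V - 1, by lia⟩
  rw [card_erase_of_mem hx, hn, Nat.add_sub_cancel] at this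
  rw [hn, Nat.add_sub_cancel] at hcard'
  rw [hn, Nat.add_sub_add_right, Nat.choose_succ_succ' n r]
  lia

theorem pos_of_nonempty (h : CrossPair V k l F G) (hF : F.Nonempty) (hG : G.Nonempty) : 0 < l := by
  obtain ⟨A, hA⟩ := hF
  obtain ⟨B, hB⟩ := hG
  obtain ⟨x, -, hxB⟩ := not_disjoint_iff.1 (h.not_disjoint A hA B hB)
  exact h.card_of_mem_right hB ▸ card_pos.2 ⟨x, hxB⟩

theorem card_add_card_add_choose_le_of_choose_lt_right (h : CrossPair V (r + 2) (s + 1) F G)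
    (hsr : s ≤ r + 1) (hV : r + s + 3 ≤ #V) (hF : F.Nonempty) (hcard : (#V - 1).choose s < #G)
    (ih : ∀ x ∈ V, HiltonMilnerBound (V.erase x) (r + 1) (s + 1)) :
    #F + #G + (#V - (s + 1)).choose (r + 2) ≤ (#V).choose (r + 2) + 1 := by
  obtain ⟨x, hx, G', hG', hcard', htrans⟩ :=
    exists_erase_of_choose_lt (l := r + 1) (by lia) h.right_subset hcard
  have hFle := (card_le_card h.symm.right_subset_transversals).trans htrans
  have := ih x hx _ G' (transversals_right hG').symm (card_pos.1 (hF.card_pos.trans_le hFle))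
    (card_pos.1 (by lia))
  obtain ⟨n, hn⟩ : ∃ n, #V = n + 1 := ⟨#V - 1, by lia⟩
  rw [card_erase_of_mem hx, hn, Nat.add_sub_cancel] at this
  rw [hn, Nat.add_sub_cancel] at hcard'
  rw [hn, Nat.add_sub_add_right, Nat.choose_succ_succ' n (r + 1)]
  have hbinom := choose_add_choose_sub_le_s15 (r := s) (n := n) (c := r + 2) (by lia) (by lia)
  have hpos : 0 < (n - (s + 1)).choose (r + 1) := Nat.choose_pos (by lia)
  lia

theorem hiltonMilnerBound (hlk : l ≤ k) (hV : k + l ≤ #V) : HiltonMilnerBound V k l := by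
  induction hn : #V generalizing V k l with
  | zero =>
    intro F G h hF hG
    have := h.pos_of_nonempty hF hG
    lia
  | succ n ih =>
    intro F G h hF hG
    obtain ⟨s, rfl⟩ : ∃ s, l = s + 1 := Nat.exists_eq_add_one.2 (h.pos_of_nonempty hF hG)
    obtain ⟨r, rfl⟩ : ∃ r, k = r + 1 := ⟨k - 1, by lia⟩
    have herase {x} (hx : x ∈ V) : #(V.erase x) = n := by rw [card_erase_of_mem hx]; lia
    rcases lt_or_ge ((#V - 1).choose r) #F with hF' | hF'
    · exact card_add_card_add_choose_le_of_choose_lt_left h (by lia) hG hF' fun x hx ↦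
        ih (by lia) (by rw [herase hx]; lia) (herase hx)
    rcases lt_or_ge ((#V - 1).choose s) #G with hG' | hG'
    · rcases hlk.eq_or_lt with hsr | hsr
      · obtain rfl : s = r := by lia
        rw [add_comm #F]
        exact card_add_card_add_choose_le_of_choose_lt_left h.symm (by lia) hF hG' fun x hx ↦
          ih (by lia) (by rw [herase hx]; lia) (herase hx)
      · obtain ⟨r, rfl⟩ : ∃ r', r = r' + 1 := ⟨r - 1, by lia⟩
        exact card_add_card_add_choose_le_of_choose_lt_right h (by lia) (by lia) hF hG' fun x hx ↦
          ih (by lia) (by rw [herase hx]; lia) (herase hx)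
    · rw [hn, Nat.add_sub_cancel] at hF' hG'
      have hbinom := choose_add_choose_sub_le_s15 (r := s) (n := n) (c := r + 1) (by lia) (by lia)
      rw [hn, Nat.add_sub_add_right, Nat.choose_succ_succ' n r]
      lia

end HiltonMilner

/-! ### Non-trivial families -/

section Nontrivial

variable {α : Type*} [DecidableEq α] {V K X Y B : Finset α} {F G : Finset (Finset α)}
  {k l a q D : ℕ} {x y z : α}

/-- The bound `|F| + |G| ≤ C(|V|, k) - 2 C(|V| - l, k) + C(|V| - 2l, k) + 2` for non-trivial
cross-intersecting families, with the negative term moved to the left. -/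
def NontrivialBound (V : Finset α) (k l : ℕ) : Prop :=
  ∀ F G, CrossPair V k l F G → IsNontrivial F → IsNontrivial G →
    #F + #G + 2 * (#V - l).choose k ≤ (#V).choose k + (#V - 2 * l).choose k + 2

/-- The intersection, within `V`, of the members of `G` containing `x`; it is all of `V` when no
member of `G` contains `x`. -/
def core (V : Finset α) (G : Finset (Finset α)) (x : α) : Finset α :=
  {z ∈ V | ∀ B ∈ G, x ∈ B → z ∈ B}

theorem two_le_of_isNontrivial (h : CrossPair V k l F G) (hFne : F.Nonempty) (hF : IsNontrivial F)
    (hG : G.Nonempty) : 2 ≤ l := by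
  obtain ⟨A, hA⟩ := hFne
  obtain ⟨B, hB⟩ := hG
  obtain ⟨b, -, hbB⟩ := not_disjoint_iff.1 (h.not_disjoint A hA B hB)
  obtain ⟨A', hA', hbA'⟩ := hF b
  obtain ⟨b', hbA'', hbB'⟩ := not_disjoint_iff.1 (h.not_disjoint A' hA' B hB)
  rw [← h.card_of_mem_right hB]
  exact one_lt_card.2 ⟨b, hbB, b', hbB', fun hbb' ↦ hbA' (hbb' ▸ hbA'')⟩

theorem card_transversals_pair_add (hX : X ⊆ V) (hY : Y ⊆ V) (hXY : Disjoint X Y) :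
    #(transversals V k {X, Y}) + (#V - #X).choose k + (#V - #Y).choose k =
      (#V).choose k + (#V - #X - #Y).choose k := by
  have hcompl : transversals V k {X, Y} =
      V.powersetCard k \ ((V \ X).powersetCard k ∪ (V \ Y).powersetCard k) := by
    ext A
    simp only [mem_transversals, mem_insert, mem_singleton, forall_eq_or_imp, forall_eq, mem_sdiff,
      mem_union, mem_powersetCard, subset_sdiff, disjoint_comm (a := A)]
    tauto
  have hinter : (V \ X).powersetCard k ∩ (V \ Y).powersetCard k =
      ((V \ X) \ Y).powersetCard k := by
    ext A
    simp only [mem_inter, mem_powersetCard, subset_sdiff]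
    tauto
  have hsub : (V \ X).powersetCard k ∪ (V \ Y).powersetCard k ⊆ V.powersetCard k :=
    union_subset (powersetCard_mono sdiff_subset) (powersetCard_mono sdiff_subset)
  have hunion := card_union_add_card_inter ((V \ X).powersetCard k) ((V \ Y).powersetCard k)
  have hle := card_le_card hsub
  rw [hcompl, card_sdiff_of_subset hsub]
  simp only [hinter, card_powersetCard, card_sdiff_of_subset hX, card_sdiff_of_subset hY,
    card_sdiff_of_subset (subset_sdiff.2 ⟨hY, hXY.symm⟩)] at hunion hle ⊢
  lia

theorem mem_core : z ∈ core V G x ↔ z ∈ V ∧ ∀ B ∈ G, x ∈ B → z ∈ B :=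
  mem_filter

theorem self_mem_core (hx : x ∈ V) : x ∈ core V G x :=
  mem_core.2 ⟨hx, fun _ _ ↦ id⟩

theorem core_subset : core V G x ⊆ V :=
  filter_subset _ _

theorem core_subset_core (hy : y ∈ core V G x) : core V G y ⊆ core V G x := fun _ hz ↦
  have hxy := (mem_core.1 hy).2
  have hyz := mem_core.1 hz
  mem_core.2 ⟨hyz.1, fun B hB hxB ↦ hyz.2 B hB (hxy B hB hxB)⟩

theorem core_subset_iff (hx : x ∈ V) (hB : B ∈ G) : core V G x ⊆ B ↔ x ∈ B :=
  ⟨fun h ↦ h (self_mem_core hx), fun hxB _ hz ↦ (mem_core.1 hz).2 B hB hxB⟩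

theorem isNontrivial_link_core (hx : x ∈ V) (hG : ∀ B ∈ G, B ⊆ V) (hxG : ∃ B ∈ G, x ∈ B) :
    IsNontrivial (link (core V G x) G) := by
  intro z
  obtain ⟨B, hB, hxB⟩ := hxG
  by_cases hz : z ∈ core V G x
  · exact ⟨B \ core V G x, mem_link.2 ⟨B, hB, (core_subset_iff hx hB).2 hxB, rfl⟩,
      fun hzB ↦ (mem_sdiff.1 hzB).2 hz⟩
  obtain ⟨B', hB', hxB', hzB'⟩ : ∃ B' ∈ G, x ∈ B' ∧ z ∉ B' := by
    by_contra! hall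
    exact hz (mem_core.2 ⟨hG B hB (hall B hB hxB), hall⟩)
  exact ⟨B' \ core V G x, mem_link.2 ⟨B', hB', (core_subset_iff hx hB').2 hxB', rfl⟩,
    fun hz' ↦ hzB' (mem_sdiff.1 hz').1⟩

theorem exists_core_subset_or_disjoint (hG : ∀ B ∈ G, B ⊆ V) (hne : ∃ B ∈ G, B.Nonempty) (y : α) :
    ∃ x ∈ core V G y, (∃ B ∈ G, x ∈ B) ∧ ∀ B ∈ G, core V G x ⊆ B ∨ Disjoint (core V G x) B := by
  have hcand : ({z ∈ core V G y | ∃ B ∈ G, z ∈ B} : Finset α).Nonempty := by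
    by_cases hy : ∃ B ∈ G, y ∈ B
    · obtain ⟨B, hB, hyB⟩ := hy
      exact ⟨y, mem_filter.2 ⟨self_mem_core (hG B hB hyB), B, hB, hyB⟩⟩
    · push Not at hy
      obtain ⟨B, hB, z, hz⟩ := hne
      exact ⟨z, mem_filter.2 ⟨mem_core.2 ⟨hG B hB hz, fun C hC hyC ↦ absurd hyC (hy C hC)⟩,
        B, hB, hz⟩⟩
  obtain ⟨x, hx, hmin⟩ := exists_min_image _ (fun z ↦ #(core V G z)) hcand
  obtain ⟨hxy, hxG⟩ := mem_filter.1 hx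
  refine ⟨x, hxy, hxG, fun B hB ↦ ?_⟩
  rw [core_subset_iff (core_subset hxy) hB, or_iff_not_imp_left, disjoint_left]
  intro hxB w hwx hwB
  have hle := hmin w (mem_filter.2 ⟨core_subset_core hxy hwx, B, hB, hwB⟩)
  have hxw : x ∈ core V G w := by
    rw [eq_of_subset_of_card_le (core_subset_core hwx) hle]
    exact self_mem_core (core_subset hxy)
  exact hxB ((mem_core.1 hxw).2 B hB hwB)

theorem insert_erase_mem_transversals (hyz : z ∈ core V G y) {A : Finset α}
    (hA : A ∈ transversals V k G) (hyA : y ∈ A) (hzA : z ∉ A) :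
    insert z (A.erase y) ∈ transversals V k G := by
  obtain ⟨hAV, hAG⟩ := mem_transversals.1 hA
  obtain ⟨hAV, hAk⟩ := mem_powersetCard.1 hAV
  obtain ⟨hzV, hyz⟩ := mem_core.1 hyz
  refine mem_transversals.2 ⟨mem_powersetCard.2 ⟨?_, ?_⟩, fun B hB hBA ↦ ?_⟩
  · exact insert_subset hzV ((erase_subset _ _).trans hAV)
  · rw [card_insert_of_notMem fun h ↦ hzA (mem_of_mem_erase h), card_erase_add_one hyA, hAk]
  · obtain ⟨hzB, hBA⟩ := disjoint_insert_right.1 hBA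
    refine hAG B hB ?_
    rw [← insert_erase hyA]
    exact disjoint_insert_right.2 ⟨fun hyB ↦ hzB (hyz B hB hyB), hBA⟩

theorem card_filter_mem_transversals_le (hyz : z ∈ core V G y) :
    #{A ∈ transversals V k G | y ∈ A} ≤ #{A ∈ transversals V k G | z ∈ A} := by
  rcases eq_or_ne y z with rfl | hne
  · rfl
  have hshift : #{A ∈ transversals V k G | y ∈ A ∧ z ∉ A} ≤
      #{A ∈ transversals V k G | z ∈ A ∧ y ∉ A} := by
    refine card_le_card_of_injOn (fun A ↦ insert z (A.erase y)) (fun A hA ↦ ?_)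
      fun A hA A' hA' h ↦ ?_
    · obtain ⟨hA, hyA, hzA⟩ := mem_filter.1 hA
      exact mem_filter.2 ⟨insert_erase_mem_transversals hyz hA hyA hzA, by simp [hne]⟩
    · obtain ⟨-, hyA, hzA⟩ := mem_filter.1 hA
      obtain ⟨-, hyA', hzA'⟩ := mem_filter.1 hA'
      rw [← insert_erase hyA, ← insert_erase hyA',
        ← erase_insert fun h ↦ hzA (mem_of_mem_erase h),
        ← erase_insert fun h ↦ hzA' (mem_of_mem_erase h)]
      exact congrArg (insert y <| erase · z) h
  have hy := card_filter_add_card_filter_not (s := {A ∈ transversals V k G | y ∈ A}) (z ∈ ·)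
  have hz := card_filter_add_card_filter_not (s := {A ∈ transversals V k G | z ∈ A}) (y ∈ ·)
  simp only [filter_filter] at hy hz
  simp only [and_comm (b := y ∈ _)] at hy hz
  lia

theorem card_filter_mem_add_card_filter_notMem_le_of_lt (h : CrossPair V k l F G) (hlk : l < k)
    (hV : k + l ≤ #V) (hx : x ∈ V) (hG : ∃ B ∈ G, x ∉ B) (hF : 0 < #{A ∈ F | x ∈ A}) :
    #{A ∈ F | x ∈ A} + #{B ∈ G | x ∉ B} + (#V - 1 - l).choose (k - 1) ≤
      (#V - 1).choose (k - 1) + 1 := by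
  have hlink := h.link_left {x}
  rw [← card_link_singleton] at hF ⊢
  rw [filter_disjoint_singleton, sdiff_singleton_eq_erase] at hlink
  rw [← card_erase_of_mem hx]
  exact hiltonMilnerBound (by lia) (by rw [card_erase_of_mem hx]; lia) _ _ hlink (card_pos.1 hF)
    (filter_nonempty_iff.2 hG)

theorem card_filter_mem_add_card_filter_notMem_le_of_choose_lt (h : CrossPair V k k F G)
    (hk : 2 ≤ k) (hV : k + k ≤ #V) (hx : x ∈ V) (hG : ∃ B ∈ G, x ∉ B)
    (hF : (#V - 2).choose (k - 2) < #{A ∈ F | x ∈ A}) :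
    #{A ∈ F | x ∈ A} + #{B ∈ G | x ∉ B} + (#V - 1 - k).choose (k - 1) ≤
      (#V - 1).choose (k - 1) + 1 := by
  obtain ⟨r, rfl⟩ : ∃ r, k = r + 2 := ⟨k - 2, by lia⟩
  have hlink := h.link_left {x}
  rw [← card_link_singleton] at hF ⊢
  rw [filter_disjoint_singleton, sdiff_singleton_eq_erase] at hlink
  have herase : #(V.erase x) = #V - 1 := card_erase_of_mem hx
  rw [← herase]
  refine card_add_card_add_choose_le_of_choose_lt_left (r := r) (s := r + 1) hlink
    (by lia) (filter_nonempty_iff.2 hG) ?_ fun y hy ↦ hiltonMilnerBound le_rfl ?_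
  · rwa [herase]
  · rw [card_erase_of_mem hy]
    lia

theorem card_add_card_le_of_forall_mem (h : CrossPair V k q F G) (hqk : q < k) (hV : k + q ≤ #V)
    (hF : F.Nonempty) (hz : ∀ A ∈ F, z ∈ A) (hG : IsNontrivial G) :
    #F + #G + (#V - 1 - q).choose (k - 1) ≤
      (#V - 1).choose (k - 1) + (#V - 1).choose (q - 1) + 1 := by
  obtain ⟨A, hA⟩ := hF
  have hzV : z ∈ V := h.subset_of_mem_left hA (hz A hA)
  have hlink := card_le_card (link_subset (K := {z}) h.right_subset)
  rw [card_link_singleton, card_powersetCard, sdiff_singleton_eq_erase, card_erase_of_mem hzV,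
    card_singleton] at hlink
  have hsplit := card_filter_add_card_filter_not (s := G) (z ∈ ·)
  have hbound := h.card_filter_mem_add_card_filter_notMem_le_of_lt hqk hV hzV (hG z)
    (card_pos.2 ⟨A, mem_filter.2 ⟨hA, hz A hA⟩⟩)
  rw [filter_true_of_mem hz] at hbound
  lia

theorem card_add_card_add_choose_le_of_forall_mem (h : CrossPair V k q F G) (hV : #V = a + l + q)
    (hq : 0 < q) (hql : q < l) (hlk : l ≤ k) (hk : k < a + l) (hF : F.Nonempty)
    (hz : ∀ A ∈ F, z ∈ A) (hG : IsNontrivial G) :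
    #F + #G + (a + l).choose k + (a + q).choose k ≤ (a + l + q).choose k + a.choose k + 1 := by
  obtain ⟨q, rfl⟩ : ∃ q', q = q' + 1 := ⟨q - 1, by lia⟩
  obtain ⟨m, rfl⟩ : ∃ m, l = m + 1 := ⟨l - 1, by lia⟩
  obtain ⟨k, rfl⟩ : ∃ k', k = k' + 1 := ⟨k - 1, by lia⟩
  have hbound := h.card_add_card_le_of_forall_mem (by lia) (by lia) hF hz hG
  have hbinom := choose_add_choose_succ_add_choose_le (a := a) (m := m) (q := q) (k := k + 1)
    (by lia) (by lia) (by lia)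
  rw [hV, show a + (m + 1) + (q + 1) - 1 = a + m + q + 1 by lia,
    show a + m + q + 1 - (q + 1) = a + m by lia] at hbound
  rw [show a + (m + 1) + (q + 1) = a + m + q + 1 + 1 by ring, ← add_assoc a m, ← add_assoc a q,
    Nat.choose_succ_succ' (a + m) k, Nat.choose_succ_succ' (a + m + q + 1) k]
  simp only [Nat.add_sub_cancel] at hbound
  lia

theorem card_add_card_le_of_right_isNontrivial (h : CrossPair V k q F G) (hV : #V = a + l + q)
    (hql : q < l) (hlk : l ≤ k) (hk : k < a + l) (hF : q + 2 ≤ l ∨ F.Nonempty)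
    (hG : IsNontrivial G) (ih : NontrivialBound V k q) :
    #F + #G + (a + l).choose k + (a + q).choose k ≤ (a + l + q).choose k + a.choose k + 1 := by
  rcases F.eq_empty_or_nonempty with rfl | hFne
  · have hGle := card_le_card h.right_subset
    rw [card_powersetCard, hV] at hGle
    have := choose_add_choose_add_choose_le (hF.resolve_right not_nonempty_empty) hlk hk
    rw [card_empty]
    lia
  obtain ⟨A, hA⟩ := hFne
  obtain ⟨x, -⟩ : V.Nonempty := card_pos.1 (by lia)
  have hq : 0 < q := h.pos_of_nonempty ⟨A, hA⟩ (hG.nonempty x)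
  by_cases hFnt : IsNontrivial F
  · have hbound := ih F G h hFnt hG
    have hbinom := choose_add_choose_lt (a := a) (p := l - q) (q := q) (k := k) (by lia) hq
      (by lia) (by lia)
    rw [hV, show a + l + q - q = a + l by lia, show a + l + q - 2 * q = a + (l - q) by lia]
      at hbound
    rw [show a + (l - q) + q = a + l by lia] at hbinom
    lia
  · simp only [IsNontrivial, not_forall, not_exists, not_and, not_not] at hFnt
    obtain ⟨z, hz⟩ := hFnt
    exact h.card_add_card_add_choose_le_of_forall_mem hV hq hql hlk hk ⟨A, hA⟩ hz hG

theorem card_filter_meets_core_le (h : CrossPair V k l F G) (hx : x ∈ V) (hG : ∃ B ∈ G, x ∉ B)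
    (hcore : ∀ B ∈ G, core V G x ⊆ B ∨ Disjoint (core V G x) B) :
    #{A ∈ F | x ∉ A ∧ ¬Disjoint (core V G x) A} + (#V - #(core V G x)).choose k +
        (#V - 1 - l).choose k ≤
      (#V - 1).choose k + (#V - #(core V G x) - l).choose k := by
  obtain ⟨B, hB, hxB⟩ := hG
  have hxK : x ∈ core V G x := self_mem_core hx
  have hKB : Disjoint (core V G x) B :=
    (hcore B hB).resolve_left fun hKB ↦ hxB (hKB hxK)
  have hsub : {A ∈ F | x ∉ A ∧ ¬Disjoint (core V G x) A} ⊆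
      transversals (V.erase x) k {(core V G x).erase x, B} := by
    intro A hA
    obtain ⟨hA, hxA, hKA⟩ := mem_filter.1 hA
    simp only [mem_transversals, mem_powersetCard, subset_erase, mem_insert, mem_singleton,
      forall_eq_or_imp, forall_eq]
    refine ⟨⟨⟨h.subset_of_mem_left hA, hxA⟩, h.card_of_mem_left hA⟩, fun hKA' ↦ hKA ?_,
      fun hBA ↦ h.not_disjoint A hA B hB hBA.symm⟩
    rw [← insert_erase hxK]
    exact disjoint_insert_left.2 ⟨hxA, hKA'⟩
  have hle := card_le_card hsub
  have hcard := card_transversals_pair_add (k := k) (erase_subset_erase x core_subset)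
    (subset_erase.2 ⟨h.subset_of_mem_right hB, hxB⟩) (hKB.mono_left (erase_subset x _))
  have hpos : 0 < #(core V G x) := card_pos.2 ⟨x, hxK⟩
  rw [card_erase_of_mem hx, card_erase_of_mem hxK, h.card_of_mem_right hB,
    Nat.sub_sub_sub_cancel_right hpos] at hcard
  lia

theorem card_filter_disjoint_core_add_card_le (h : CrossPair V k l F G) (hlk : l ≤ k)
    (hV : k + l < #V) (hF : IsNontrivial F) (hx : x ∈ V) (hxG : ∃ B ∈ G, x ∈ B)
    (ih : ∀ K ⊆ V, K.Nonempty → #K ≤ l → NontrivialBound (V \ K) k (l - #K)) :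
    #{A ∈ F | Disjoint (core V G x) A} + #{B ∈ G | x ∈ B} + (#V - l).choose k +
        (#V - #(core V G x) - l).choose k ≤
      (#V - #(core V G x)).choose k + (#V - 2 * l).choose k + 1 := by
  have hxK : x ∈ core V G x := self_mem_core hx
  have hpos : 0 < #(core V G x) := card_pos.2 ⟨x, hxK⟩
  have hKl : #(core V G x) ≤ l := by
    obtain ⟨B, hB, hxB⟩ := hxG
    exact h.card_of_mem_right hB ▸ card_le_card ((core_subset_iff hx hB).2 hxB)
  have hsdiff : #(V \ core V G x) = #V - #(core V G x) := card_sdiff_of_subset core_subset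
  have hsize : l - #(core V G x) + 2 ≤ l ∨ {A ∈ F | Disjoint (core V G x) A}.Nonempty := by
    rcases (Nat.succ_le_iff.2 hpos).eq_or_lt with hone | hlt
    · obtain ⟨w, hw⟩ := card_eq_one.1 hone.symm
      rw [hw, filter_disjoint_singleton]
      exact .inr (filter_nonempty_iff.2 (hF w))
    · exact .inl (by lia)
  have hbound := (h.link_right (core V G x)).card_add_card_le_of_right_isNontrivial
    (a := #V - 2 * l) (l := l) (by lia) (by lia) hlk (by lia) hsize
    (isNontrivial_link_core hx (fun B hB ↦ h.subset_of_mem_right hB) hxG)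
    (ih _ core_subset ⟨x, hxK⟩ hKl)
  have hmem : {B ∈ G | x ∈ B} = {B ∈ G | core V G x ⊆ B} :=
    filter_congr fun B hB ↦ (core_subset_iff hx hB).symm
  rw [card_link, show #V - 2 * l + l = #V - l by lia,
    show #V - l + (l - #(core V G x)) = #V - #(core V G x) by lia,
    show #V - 2 * l + (l - #(core V G x)) = #V - #(core V G x) - l by lia] at hbound
  rw [hmem]
  lia

theorem card_add_card_le_of_core (h : CrossPair V k l F G) (hlk : l ≤ k) (hV : k + l < #V)
    (hF : IsNontrivial F) (hG : IsNontrivial G) (hx : x ∈ V) (hxG : ∃ B ∈ G, x ∈ B)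
    (hcore : ∀ B ∈ G, core V G x ⊆ B ∨ Disjoint (core V G x) B)
    (hdeg : #{A ∈ F | x ∈ A} + #{B ∈ G | x ∉ B} + (#V - 1 - l).choose (k - 1) ≤
      (#V - 1).choose (k - 1) + 1)
    (ih : ∀ K ⊆ V, K.Nonempty → #K ≤ l → NontrivialBound (V \ K) k (l - #K)) :
    #F + #G + 2 * (#V - l).choose k ≤ (#V).choose k + (#V - 2 * l).choose k + 2 := by
  have hmeet := h.card_filter_meets_core_le hx (hG x) hcore
  have hrest := h.card_filter_disjoint_core_add_card_le hlk hV hF hx hxG ih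
  have hFsplit := card_filter_add_card_filter_not (s := F) (x ∈ ·)
  have hGsplit := card_filter_add_card_filter_not (s := G) (x ∈ ·)
  have hsplit : #{A ∈ F | Disjoint (core V G x) A} +
      #{A ∈ F | x ∉ A ∧ ¬Disjoint (core V G x) A} = #{A ∈ F | x ∉ A} := by
    rw [← card_filter_add_card_filter_not (s := {A ∈ F | x ∉ A}) (Disjoint (core V G x) ·),
      filter_filter, filter_filter]
    congr 2
    exact filter_congr fun A _ ↦
      ⟨fun hKA ↦ ⟨disjoint_left.1 hKA (self_mem_core hx), hKA⟩, And.right⟩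
  have hl : 0 < l := h.pos_of_nonempty (hF.nonempty x) (hG.nonempty x)
  obtain ⟨k, rfl⟩ : ∃ k', k = k' + 1 := ⟨k - 1, by lia⟩
  obtain ⟨m, hm⟩ : ∃ m, #V - l = m + 1 := ⟨#V - l - 1, by lia⟩
  obtain ⟨n, hn⟩ : ∃ n, #V = n + 1 := ⟨#V - 1, by lia⟩
  have hPascalV := Nat.choose_succ_succ' n k
  have hPascal := Nat.choose_succ_succ' m k
  rw [← hn] at hPascalV
  rw [← hm] at hPascal
  rw [show n = #V - 1 by lia] at hPascalV
  rw [show m = #V - 1 - l by lia] at hPascal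
  simp only [Nat.add_sub_cancel] at hdeg
  lia

theorem card_add_card_le_of_lt_degree (h : CrossPair V k l F G) (hlk : l ≤ k) (hV : k + l < #V)
    (hF : IsNontrivial F) (hG : IsNontrivial G)
    (hD : ∀ F', CrossPair V k l F' G → ∀ x ∈ V, D < #{A ∈ F' | x ∈ A} →
      #{A ∈ F' | x ∈ A} + #{B ∈ G | x ∉ B} + (#V - 1 - l).choose (k - 1) ≤
        (#V - 1).choose (k - 1) + 1)
    (ih : ∀ K ⊆ V, K.Nonempty → #K ≤ l → NontrivialBound (V \ K) k (l - #K))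
    (hy : D < #{A ∈ F | y ∈ A}) :
    #F + #G + 2 * (#V - l).choose k ≤ (#V).choose k + (#V - 2 * l).choose k + 2 := by
  -- Degrees are monotone along `core` only after `F` is enlarged to all transversals of `G`.
  have hsub : F ⊆ transversals V k G := h.symm.right_subset_transversals
  have hmax : CrossPair V k l (transversals V k G) G := (transversals_right h.right_subset).symm
  obtain ⟨A, hA⟩ := hF.nonempty y
  obtain ⟨B, hB⟩ := hG.nonempty y
  obtain ⟨b, -, hbB⟩ := not_disjoint_iff.1 (h.not_disjoint A hA B hB)
  obtain ⟨x, hxy, hxG, hcore⟩ := exists_core_subset_or_disjoint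
    (fun B hB ↦ h.subset_of_mem_right hB) ⟨B, hB, b, hbB⟩ y
  have hx : x ∈ V := core_subset hxy
  have hdeg : D < #{A ∈ transversals V k G | x ∈ A} :=
    hy.trans_le ((card_le_card (filter_subset_filter _ hsub)).trans
      (card_filter_mem_transversals_le hxy))
  have := hmax.card_add_card_le_of_core hlk hV (hF.mono hsub) hG hx hxG hcore
    (hD _ hmax x hx hdeg) ih
  have := card_le_card hsub
  lia

theorem card_le_mul_of_degree_le (h : CrossPair V k l F G) (hG : G.Nonempty)
    (hD : ∀ y, #{A ∈ F | y ∈ A} ≤ D) : #F ≤ l * D := by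
  obtain ⟨B, hB⟩ := hG
  calc #F = ∑ A ∈ F, 1 := card_eq_sum_ones F
    _ ≤ ∑ A ∈ F, #(B ∩ A) := sum_le_sum fun A hA ↦
        (not_disjoint_iff_nonempty_inter.1 fun hBA ↦ h.not_disjoint A hA B hB hBA.symm).card_pos
    _ ≤ l * D := h.card_of_mem_right hB ▸ sum_card_inter_le fun y _ ↦ hD y

theorem mul_card_le_mul_of_degree_le (hF : F ⊆ V.powersetCard k)
    (hD : ∀ y, #{A ∈ F | y ∈ A} ≤ D) : k * #F ≤ #V * D := by
  calc k * #F = ∑ A ∈ F, #(V ∩ A) := by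
        rw [mul_comm, ← smul_eq_mul, ← sum_const]
        refine sum_congr rfl fun A hA ↦ ?_
        obtain ⟨hAV, hAk⟩ := mem_powersetCard.1 (hF hA)
        rw [inter_eq_right.2 hAV, hAk]
    _ ≤ #V * D := sum_card_inter_le fun y _ ↦ hD y

theorem card_add_card_le_of_degree_le (h : CrossPair V k k F G) (hk : 2 ≤ k) (hV : 2 * k ≤ #V)
    (hF : F.Nonempty) (hG : G.Nonempty)
    (hDF : ∀ y, #{A ∈ F | y ∈ A} ≤ (#V - 2).choose (k - 2))
    (hDG : ∀ y, #{B ∈ G | y ∈ B} ≤ (#V - 2).choose (k - 2)) :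
    #F + #G + 2 * (#V - k).choose k ≤ (#V).choose k + (#V - 2 * k).choose k := by
  rcases lt_or_ge (#V) (k * (k - 1) + 2) with hlt | hge
  · have hbinom := two_mul_mul_choose_add_le_of_lt hk hV hlt
    have hFle := mul_card_le_mul_of_degree_le h.left_subset hDF
    have hGle := mul_card_le_mul_of_degree_le h.right_subset hDG
    refine Nat.le_add_right_of_le (Nat.le_of_mul_le_mul_left ?_ (show 0 < k by lia))
    rw [mul_add, mul_add]
    lia
  · have hbinom := two_mul_mul_choose_add_le_of_le hk hV hge
    have hFle := h.card_le_mul_of_degree_le hG hDF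
    have hGle := h.symm.card_le_mul_of_degree_le hF hDG
    lia

theorem nontrivialBound_of_lt (hlk : l < k) (hV : k + l < #V)
    (ih : ∀ K ⊆ V, K.Nonempty → #K ≤ l → NontrivialBound (V \ K) k (l - #K)) :
    NontrivialBound V k l := by
  intro F G h hF hG
  obtain ⟨v, -⟩ : V.Nonempty := card_pos.1 (by lia)
  obtain ⟨A, hA⟩ := hF.nonempty v
  obtain ⟨y, hyA⟩ : A.Nonempty := card_pos.1 (by rw [h.card_of_mem_left hA]; lia)
  exact h.card_add_card_le_of_lt_degree (D := 0) hlk.le hV hF hG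
    (fun F' h' x hx ↦
      h'.card_filter_mem_add_card_filter_notMem_le_of_lt hlk hV.le hx (hG x))
    ih (card_pos.2 ⟨A, mem_filter.2 ⟨hA, hyA⟩⟩)

theorem nontrivialBound_self (hV : k + k < #V)
    (ih : ∀ K ⊆ V, K.Nonempty → #K ≤ k → NontrivialBound (V \ K) k (k - #K)) :
    NontrivialBound V k k := by
  intro F G h hF hG
  obtain ⟨v, -⟩ : V.Nonempty := card_pos.1 (by lia)
  have hk : 2 ≤ k := h.two_le_of_isNontrivial (hF.nonempty v) hF (hG.nonempty v)
  have hdegree {F G} (h : CrossPair V k k F G) (hF : IsNontrivial F) (hG : IsNontrivial G) {y}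
      (hy : (#V - 2).choose (k - 2) < #{A ∈ F | y ∈ A}) :
      #F + #G + 2 * (#V - k).choose k ≤ (#V).choose k + (#V - 2 * k).choose k + 2 :=
    h.card_add_card_le_of_lt_degree le_rfl hV hF hG
      (fun F' h' x hx ↦
        h'.card_filter_mem_add_card_filter_notMem_le_of_choose_lt hk hV.le hx (hG x)) ih hy
  by_cases hDF : ∀ y, #{A ∈ F | y ∈ A} ≤ (#V - 2).choose (k - 2)
  · by_cases hDG : ∀ y, #{B ∈ G | y ∈ B} ≤ (#V - 2).choose (k - 2)
    · have := h.card_add_card_le_of_degree_le hk (by lia) (hF.nonempty v) (hG.nonempty v) hDF hDG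
      lia
    · push Not at hDG
      obtain ⟨y, hy⟩ := hDG
      rw [add_comm #F]
      exact hdegree h.symm hG hF hy
  · push Not at hDF
    obtain ⟨y, hy⟩ := hDF
    exact hdegree h hF hG hy

theorem nontrivialBound (hlk : l ≤ k) (hV : k + l < #V) : NontrivialBound V k l := by
  induction hn : #V using Nat.strong_induction_on generalizing V l with
  | _ n ih =>
    have ih' (K) (hKV : K ⊆ V) (hK : K.Nonempty) (hKl : #K ≤ l) :
        NontrivialBound (V \ K) k (l - #K) := by
      have hKpos := hK.card_pos
      have hsdiff := card_sdiff_of_subset hKV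
      exact ih _ (by lia) (by lia) (by lia) rfl
    rcases hlk.lt_or_eq with hlt | rfl
    · exact nontrivialBound_of_lt hlt hV ih'
    · exact nontrivialBound_self hV ih'

end Nontrivial

end CrossPair

theorem stmt15_general {α : Type*} [DecidableEq α] {V : Finset α} {k l : ℕ} (hlk : l ≤ k)
    (hV : k + l < #V) {F G : Finset (Finset α)} (hF : F ⊆ V.powersetCard k)
    (hG : G ⊆ V.powersetCard l) (hcross : ∀ A ∈ F, ∀ B ∈ G, (A ∩ B).Nonempty)
    (hntF : ∀ x, ∃ A ∈ F, x ∉ A) (hntG : ∀ x, ∃ B ∈ G, x ∉ B) :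
    (#F + #G : ℤ) ≤
      ((#V).choose k : ℤ) - 2 * (#V - l).choose k + (#V - 2 * l).choose k + 2 := by
  have h : CrossPair V k l F G :=
    ⟨hF, hG, fun A hA B hB ↦ not_disjoint_iff_nonempty_inter.2 (hcross A hA B hB)⟩
  have := CrossPair.nontrivialBound hlk hV F G h hntF hntG
  lia

end

/-- Theorem 4.1: the maximum of |F| + |G| for non-trivial cross-intersecting
families of uniformities k and ℓ. -/
theorem stmt15 (n k l : ℕ) (hl : 2 ≤ l) (hlk : l ≤ k) (hn : k + l < n)
    (F G : Finset (Finset ℕ))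
    (hF : F ⊆ (Finset.Icc 1 n).powersetCard k)
    (hG : G ⊆ (Finset.Icc 1 n).powersetCard l)
    (hcross : ∀ A ∈ F, ∀ B ∈ G, (A ∩ B).Nonempty)
    (hntF : ∀ x : ℕ, ∃ A ∈ F, x ∉ A)
    (hntG : ∀ x : ℕ, ∃ B ∈ G, x ∉ B) :
    (F.card + G.card : ℤ) ≤
      (n.choose k : ℤ) - 2 * (n - l).choose k + (n - 2 * l).choose k + 2 := by
  simpa using stmt15_general hlk (by simpa using hn) hF hG hcross hntF hntG
end
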